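/- arXiv:2507.14026 — 2 statements merged into one kernel-verified Lean document; each statement's English description precedes it below -/
import Mathlib

section
/- Let T ∈ B_{(1^r)}(n,m) be a single-column lexicographic bitableau, i.e., a lexicographically strictly increasing sequence of pairs (a_1,b_1) < ⋯ < (a_r,b_r) read top to bottom. Form the Burge word of T by listing the boxes grouped by first coordinate k = 1,2,…,n in increasing order, within each group from the bottom of the column to the top (so second coordinates are strictly decreasing within each group), and let bRSK(T) = (P, Q^t), where P is obtained by row-inserting the second coordinates in this order, Q is the (row-strict) recording tableau of the first coordinates, and Q^t is the transpose of Q. Then bRSK(T) = (P(w(T)), P(u'(T))), where P(·) denotes the row-insertion tableau of a word. -/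
/-- Lexicographic (weak) order on pairs: `(a,b) ≤ (a',b')` iff `a < a'`, or `a = a'` and `b ≤ b'`. -/
def lexLe (p q : ℕ × ℕ) : Prop := p.1 < q.1 ∨ (p.1 = q.1 ∧ p.2 ≤ q.2)

/-- Lexicographic strict order on pairs. -/
def lexLt (p q : ℕ × ℕ) : Prop := p.1 < q.1 ∨ (p.1 = q.1 ∧ p.2 < q.2)

instance : DecidableRel lexLe := fun p q =>
  inferInstanceAs (Decidable (p.1 < q.1 ∨ (p.1 = q.1 ∧ p.2 ≤ q.2)))

instance : DecidableRel lexLt := fun p q =>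
  inferInstanceAs (Decidable (p.1 < q.1 ∨ (p.1 = q.1 ∧ p.2 < q.2)))

/-- Row-insert the value `v` into the tableau `P` (a list of rows): `v` is appended at the end
of the first row if it is at least as large as every entry there; otherwise it replaces the
leftmost entry strictly larger than `v`, which is then inserted into the next row. -/
def insRow (v : ℕ) : List (List ℕ) → List (List ℕ)
  | [] => [[v]]
  | r :: rest =>
    match r.findIdx? (fun x => decide (v < x)) with
    | none => (r ++ [v]) :: rest
    | some idx => (r.set idx v) :: insRow (r.getD idx 0) rest

/-- The insertion tableau `P(w)` of a word: successively row-insert the letters of `w`,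
starting from the empty tableau. -/
def Pword (w : List ℕ) : List (List ℕ) :=
  w.foldl (fun t v => insRow v t) []

/-- The index of the row in which `p'` (the result of a row insertion into `p`) has one more
box than `p`. -/
def growIdx (p p' : List (List ℕ)) : ℕ :=
  (List.range p'.length).findIdx fun r => decide ((p.getD r []).length ≠ (p'.getD r []).length)

/-- Append the value `a` at the end of row `r` of the tableau `q`. -/
def addBox (q : List (List ℕ)) (r a : ℕ) : List (List ℕ) :=
  if r < q.length then q.set r (q.getD r [] ++ [a]) else q ++ [[a]]

/-- The RSK correspondence applied to a biword, given as a list of (top, bottom) pairs: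
the bottom entries are row-inserted in order to form the insertion tableau `P`, and the top
entries are recorded in the newly created boxes to form the recording tableau `Q`. -/
def rsk (w : List (ℕ × ℕ)) : List (List ℕ) × List (List ℕ) :=
  w.foldl (fun PQ ab =>
    let P' := insRow ab.2 PQ.1
    (P', addBox PQ.2 (growIdx PQ.1 P') ab.1)) ([], [])

/-- A word is Yamanouchi if for every `i ≥ 1`, every suffix contains at least as many letters
`i` as letters `i+1`. -/
def Yamanouchi (w : List ℕ) : Prop :=
  ∀ i : ℕ, 1 ≤ i → ∀ s ∈ w.tails, s.count (i + 1) ≤ s.count i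

/-- A one-row lexicographic bitableau in `B_{(r)}(n,m)`, encoded as its list of entries read
left to right: pairs in `{1,…,n} × {1,…,m}`, weakly increasing in lexicographic order. -/
def IsRowBitab (n m r : ℕ) (L : List (ℕ × ℕ)) : Prop :=
  L.length = r ∧ (∀ p ∈ L, (1 ≤ p.1 ∧ p.1 ≤ n) ∧ (1 ≤ p.2 ∧ p.2 ≤ m)) ∧ L.Chain' lexLe

/-- The sort-by-top reading word `w(T)` of a one-row bitableau: for `k = 1, …, n` in increasing
order, the second coordinates of the boxes with first coordinate `k`, read left to right. -/
def wRow (n : ℕ) (L : List (ℕ × ℕ)) : List ℕ :=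
  (List.range n).flatMap fun k => (L.filter fun p => decide (p.1 = k + 1)).map Prod.snd

/-- The reading word `u(T)` of a one-row bitableau: for `k = 1, …, m` in increasing order,
the first coordinates of the boxes with second coordinate `k`, read left to right. -/
def uRow (m : ℕ) (L : List (ℕ × ℕ)) : List ℕ :=
  (List.range m).flatMap fun k => (L.filter fun p => decide (p.2 = k + 1)).map Prod.fst

/-- A single-column lexicographic bitableau in `B_{(1^r)}(n,m)`, encoded as its list of entries
read top to bottom: pairs in `{1,…,n} × {1,…,m}`, strictly increasing in lexicographic order. -/
def IsColBitab (n m r : ℕ) (L : List (ℕ × ℕ)) : Prop :=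
  L.length = r ∧ (∀ p ∈ L, (1 ≤ p.1 ∧ p.1 ≤ n) ∧ (1 ≤ p.2 ∧ p.2 ≤ m)) ∧ L.Chain' lexLt

/-- The sort-by-top reading word `w(T)` of a single-column bitableau: for `k = 1, …, n` in
increasing order, the second coordinates of the boxes with first coordinate `k`, each group
read from the bottom of the column to the top. -/
def wCol (n : ℕ) (L : List (ℕ × ℕ)) : List ℕ :=
  (List.range n).flatMap fun k => ((L.filter fun p => decide (p.1 = k + 1)).reverse).map Prod.snd

/-- The reading word `u'(T)` of a single-column bitableau: for `k = m, m−1, …, 1` in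
decreasing order, the first coordinates of the boxes with second coordinate `k`, each group
read from the bottom of the column to the top. -/
def uCol' (m : ℕ) (L : List (ℕ × ℕ)) : List ℕ :=
  ((List.range m).reverse).flatMap fun k =>
    ((L.filter fun p => decide (p.2 = k + 1)).reverse).map Prod.fst

/-- The Burge word of a single-column bitableau: list the boxes grouped by first coordinate
`k = 1, …, n` in increasing order, within each group from the bottom of the column to the
top (so second coordinates strictly decrease within each group). -/
def burge (n : ℕ) (L : List (ℕ × ℕ)) : List (ℕ × ℕ) :=
  (List.range n).flatMap fun k => (L.filter fun p => decide (p.1 = k + 1)).reverse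

/-- The transpose of a tableau given as a list of rows: column `c` becomes row `c`. -/
def transposeT (q : List (List ℕ)) : List (List ℕ) :=
  (List.range (q.getD 0 []).length).map fun c => q.filterMap fun row => row[c]?

/-- The Burge insertion correspondence `bRSK` on a single-column bitableau: row-insert the
second coordinates of the Burge word in order to form `P`, record the first coordinates to
form the (row-strict) recording tableau `Q`, and output `(P, Qᵗ)`. -/
def bRSK (n : ℕ) (L : List (ℕ × ℕ)) : List (List ℕ) × List (List ℕ) :=
  ((rsk (burge n L)).1, transposeT (rsk (burge n L)).2)

/-! ### One-row insertions -/

/-- Row insertion in one row: new row and bumped entry. -/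
def rins (v : ℕ) : List ℕ → List ℕ × Option ℕ
  | [] => ([v], none)
  | x :: xs => if v < x then (v :: xs, some x) else (x :: (rins v xs).1, (rins v xs).2)

/-- Dual row insertion in one row: bumps the leftmost entry `≥ v`. -/
def dins (v : ℕ) : List ℕ → List ℕ × Option ℕ
  | [] => ([v], none)
  | x :: xs => if v ≤ x then (v :: xs, some x) else (x :: (dins v xs).1, (dins v xs).2)

/-- Tableau insertion attached to a one-row insertion. -/
def tins (I : ℕ → List ℕ → List ℕ × Option ℕ) (v : ℕ) : List (List ℕ) → List (List ℕ)
  | [] => [(I v []).1]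
  | r :: R => (I v r).1 ::
      (match (I v r).2 with
       | none => R
       | some c => tins I c R)

/-- Insert a word in one row: final row and bumped word. -/
def runG (I : ℕ → List ℕ → List ℕ × Option ℕ) : List ℕ → List ℕ → List ℕ × List ℕ
  | S, [] => (S, [])
  | S, v :: w => ((runG I (I v S).1 w).1, (I v S).2.toList ++ (runG I (I v S).1 w).2)

theorem runG_append (I : ℕ → List ℕ → List ℕ × Option ℕ) (u w S : List ℕ) :
    runG I S (u ++ w) =
      ((runG I (runG I S u).1 w).1, (runG I S u).2 ++ (runG I (runG I S u).1 w).2) := by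
  induction u generalizing S with
  | nil => simp [runG]
  | cons v u ih => simp [runG, ih]

theorem foldl_tins_cons (I : ℕ → List ℕ → List ℕ × Option ℕ) (w S : List ℕ)
    (R : List (List ℕ)) :
    w.foldl (fun t v => tins I v t) (S :: R) =
      (runG I S w).1 :: (runG I S w).2.foldl (fun t v => tins I v t) R := by
  induction w generalizing S R with
  | nil => simp [runG]
  | cons v w ih =>
    simp only [List.foldl_cons, tins, runG]
    rw [ih]
    cases h : (I v S).2 <;> simp

theorem foldl_tins_nil (I : ℕ → List ℕ → List ℕ × Option ℕ) (hI : ∀ v, (I v []).2 = none)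
    (w : List ℕ) (hw : w ≠ []) :
    w.foldl (fun t v => tins I v t) [] =
      (runG I [] w).1 :: (runG I [] w).2.foldl (fun t v => tins I v t) [] := by
  cases w with
  | nil => exact absurd rfl hw
  | cons v w =>
    simp only [List.foldl_cons, tins, runG]
    rw [foldl_tins_cons, hI]
    simp

theorem rins_eq (v : ℕ) (r : List ℕ) :
    rins v r = match r.findIdx? (fun x => decide (v < x)) with
      | none => (r ++ [v], none)
      | some i => (r.set i v, some (r.getD i 0)) := by
  induction r with
  | nil => simp [rins]
  | cons x xs ih =>
    by_cases h : v < x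
    · simp [rins, h, List.findIdx?_cons]
    · simp only [rins, h, if_false, List.findIdx?_cons, ih]
      cases h2 : xs.findIdx? (fun x => decide (v < x)) <;> simp

theorem insRow_eq (v : ℕ) (T : List (List ℕ)) : insRow v T = tins rins v T := by
  induction T generalizing v with
  | nil => simp [insRow, tins, rins]
  | cons r R ih =>
    rw [insRow, tins, rins_eq]
    cases h2 : r.findIdx? (fun x => decide (v < x)) <;> simp [ih]

theorem Pword_eq (w : List ℕ) : Pword w = w.foldl (fun t v => tins rins v t) [] := by
  unfold Pword
  simp only [insRow_eq]

theorem Pword_ne (w : List ℕ) (hw : w ≠ []) :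
    Pword w = (runG rins [] w).1 :: Pword (runG rins [] w).2 := by
  rw [Pword_eq, Pword_eq, foldl_tins_nil rins (fun v => rfl) w hw]

theorem runG_length (I : ℕ → List ℕ → List ℕ × Option ℕ) (S w : List ℕ) :
    (runG I S w).2.length ≤ w.length := by
  induction w generalizing S with
  | nil => simp [runG]
  | cons v w ih =>
    have := ih (I v S).1
    simp only [runG, List.length_append, List.length_cons]
    cases (I v S).2 <;> simp <;> omega

theorem runG_length_nil (I : ℕ → List ℕ → List ℕ × Option ℕ) (hI : ∀ v, (I v []).2 = none)
    (w : List ℕ) (hw : w ≠ []) : (runG I [] w).2.length < w.length := by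
  cases w with
  | nil => exact absurd rfl hw
  | cons v w =>
    have := runG_length I (I v []).1 w
    simp only [runG, hI]
    simp; omega

/-! ### Knuth equivalence -/

/-- Elementary Knuth relation in context, closed under equivalence. -/
inductive Kn : List ℕ → List ℕ → Prop
  | refl (w) : Kn w w
  | symm {u w} : Kn u w → Kn w u
  | trans {u v w} : Kn u v → Kn v w → Kn u w
  | k1 (p s : List ℕ) (x y z : ℕ) : x < y → y ≤ z →
      Kn (p ++ [y, z, x] ++ s) (p ++ [y, x, z] ++ s)
  | k2 (p s : List ℕ) (x y z : ℕ) : x ≤ y → y < z →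
      Kn (p ++ [x, z, y] ++ s) (p ++ [z, x, y] ++ s)

theorem Kn.ctx {u w : List ℕ} (h : Kn u w) (p s : List ℕ) : Kn (p ++ u ++ s) (p ++ w ++ s) := by
  induction h with
  | refl => exact .refl _
  | symm _ ih => exact .symm ih
  | trans _ _ ih1 ih2 => exact .trans ih1 ih2
  | k1 p' s' x y z h1 h2 =>
    have := Kn.k1 (p ++ p') (s' ++ s) x y z h1 h2
    simpa using this
  | k2 p' s' x y z h1 h2 =>
    have := Kn.k2 (p ++ p') (s' ++ s) x y z h1 h2
    simpa using this

theorem rins_some_lt {v c : ℕ} {S : List ℕ} (h : (rins v S).2 = some c) : v < c ∧ c ∈ S := by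
  induction S with
  | nil => simp [rins] at h
  | cons x xs ih =>
    by_cases hv : v < x
    · simp [rins, hv] at h; subst h; simp [hv]
    · simp [rins, hv] at h
      have := ih h
      simp [this]

theorem rins_mem {v t : ℕ} {S : List ℕ} (h : t ∈ (rins v S).1) : t = v ∨ t ∈ S := by
  induction S with
  | nil => simpa [rins] using h
  | cons x xs ih =>
    by_cases hv : v < x
    · simp [rins, hv] at h; simp; tauto
    · simp [rins, hv] at h
      simp; tauto

theorem rins_sorted {v : ℕ} {S : List ℕ} (hS : S.Pairwise (· ≤ ·)) :
    (rins v S).1.Pairwise (· ≤ ·) := by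
  induction S with
  | nil => simp [rins]
  | cons x xs ih =>
    rw [List.pairwise_cons] at hS
    by_cases hv : v < x
    · simp only [rins, hv, if_true, List.pairwise_cons]
      exact ⟨fun a ha => by have := hS.1 a ha; omega, hS.2⟩
    · simp only [rins, hv, if_false, List.pairwise_cons]
      refine ⟨fun a ha => ?_, ih hS.2⟩
      rcases rins_mem ha with rfl | h
      · omega
      · exact hS.1 _ h

/-- Inserting `y ≤ z` in order: bumps weakly increase. -/
theorem rins_two_le {y z : ℕ} (S : List ℕ) (hS : S.Pairwise (· ≤ ·)) (hyz : y ≤ z) :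
    ((rins y S).2 = none → (rins z (rins y S).1).2 = none) ∧
    (∀ b c, (rins y S).2 = some b → (rins z (rins y S).1).2 = some c → b ≤ c) := by
  induction S with
  | nil => simp [rins, Nat.not_lt.2 hyz]
  | cons x xs ih =>
    rw [List.pairwise_cons] at hS
    by_cases hv : y < x
    · simp only [rins, hv, if_true, Nat.not_lt.2 hyz, if_false]
      refine ⟨by simp, fun b c hb hc => ?_⟩
      have := hS.1 _ (rins_some_lt hc).2
      simp at hb; omega
    · have hz : ¬ z < x := by omega
      simp only [rins, hv, if_false, hz]
      exact ih hS.2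

/-- Inserting `z > y` in order: the second one always bumps something, strictly smaller. -/
theorem rins_two_gt {y z : ℕ} (S : List ℕ) (hyz : y < z) :
    ∃ c, (rins y (rins z S).1).2 = some c ∧ (∀ b, (rins z S).2 = some b → c < b) := by
  have key : ∃ c, (rins y (rins z S).1).2 = some c ∧ c ≤ z := by
    induction S with
    | nil => simp [rins, hyz]
    | cons x xs ih =>
      by_cases hv : z < x
      · simp [rins, hv, hyz]
      · by_cases hy : y < x
        · simp only [rins, hv, if_false, hy, if_true]
          exact ⟨x, rfl, by omega⟩
        · simp only [rins, hv, if_false, hy]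
          exact ih
  obtain ⟨c, h1, h2⟩ := key
  exact ⟨c, h1, fun b hb => by have := (rins_some_lt hb).1; omega⟩

theorem run_k1 {x y z : ℕ} (hxy : x < y) (hyz : y ≤ z) (S : List ℕ)
    (hS : S.Pairwise (· ≤ ·)) :
    (runG rins S [y, z, x]).1 = (runG rins S [y, x, z]).1 ∧
    Kn (runG rins S [y, z, x]).2 (runG rins S [y, x, z]).2 := by
  induction S with
  | nil =>
    have : ¬ z < y := by omega
    have : ¬ z < x := by omega
    simp [runG, rins, *]
    exact .refl _
  | cons s xs ih =>
    rw [List.pairwise_cons] at hS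
    by_cases hx : x < s
    · by_cases hy : y < s
      · have h1 : ¬ z < y := by omega
        have h2 : ¬ z < x := by omega
        simp only [runG, rins, hy, h1, h2, hxy, if_true, if_false, true_and]
        cases h : (rins z xs).2 with
        | none => exact .refl _
        | some c =>
          have := hS.1 _ (rins_some_lt h).2
          exact Kn.k1 [] [] y s c hy this
      · have h1 : ¬ z < s := by omega
        have h2 : ¬ z < x := by omega
        simp only [runG, rins, hx, hy, h1, h2, if_true, if_false, true_and]
        have := rins_two_le xs hS.2 hyz
        cases h : (rins y xs).2 with
        | none => rw [this.1 h]; exact .refl _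
        | some b =>
          cases h' : (rins z (rins y xs).1).2 with
          | none => exact .refl _
          | some c =>
            have h3 := this.2 b c h h'
            have h4 := hS.1 _ (rins_some_lt h).2
            have h5 := (rins_some_lt h).1
            exact Kn.k1 [] [] s b c (by omega) h3
    · have h1 : ¬ y < s := by omega
      have h2 : ¬ z < s := by omega
      have := ih hS.2
      simp only [runG, rins, hx, h1, h2, if_false] at this ⊢
      exact ⟨by rw [this.1], this.2⟩

theorem run_k2 {x y z : ℕ} (hxy : x ≤ y) (hyz : y < z) (S : List ℕ)
    (hS : S.Pairwise (· ≤ ·)) :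
    (runG rins S [x, z, y]).1 = (runG rins S [z, x, y]).1 ∧
    Kn (runG rins S [x, z, y]).2 (runG rins S [z, x, y]).2 := by
  induction S with
  | nil =>
    have h1 : ¬ z < x := by omega
    have h2 : ¬ y < x := by omega
    have h3 : x < z := by omega
    simp [runG, rins, *]
    exact .refl _
  | cons s xs ih =>
    rw [List.pairwise_cons] at hS
    have h1 : ¬ z < x := by omega
    have h2 : ¬ y < x := by omega
    have h3 : x < z := by omega
    by_cases hx : x < s
    · by_cases hz : z < s
      · simp only [runG, rins, hx, hz, h1, h2, h3, if_true, if_false]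
        cases xs with
        | nil =>
          simp [rins, hyz]
          exact .refl _
        | cons t ts =>
          have ht := hS.1 t (by simp)
          have h4 : z < t := by omega
          have h5 : y < t := by omega
          simp only [rins, h4, h5, hyz, if_true, true_and]
          exact Kn.symm (Kn.symm (Kn.k1 [] [] z s t hz ht))
      · simp only [runG, rins, hx, hz, h1, h2, if_true, if_false, true_and]
        obtain ⟨c, hc, hlt⟩ := rins_two_gt xs hyz
        rw [hc]
        cases h : (rins z xs).2 with
        | none => exact .refl _
        | some b =>
          have h4 := hlt b h
          have h5 : s ≤ c := by
            rcases rins_mem (rins_some_lt hc).2 with h6 | h6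
            · omega
            · exact hS.1 _ h6
          exact Kn.k2 [] [] s c b h5 h4
    · have h5 : ¬ y < s := by omega
      have h6 : ¬ z < s := by omega
      have := ih hS.2
      simp only [runG, rins, hx, h5, h6, if_false] at this ⊢
      exact ⟨by rw [this.1], this.2⟩

theorem run_sorted (w S : List ℕ) (hS : S.Pairwise (· ≤ ·)) :
    (runG rins S w).1.Pairwise (· ≤ ·) := by
  induction w generalizing S with
  | nil => exact hS
  | cons v w ih => exact ih _ (rins_sorted hS)

theorem run_ctx {u w : List ℕ} (p s S : List ℕ) (hS : S.Pairwise (· ≤ ·))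
    (h : ∀ S : List ℕ, S.Pairwise (· ≤ ·) → (runG rins S u).1 = (runG rins S w).1 ∧
      Kn (runG rins S u).2 (runG rins S w).2) :
    (runG rins S (p ++ u ++ s)).1 = (runG rins S (p ++ w ++ s)).1 ∧
      Kn (runG rins S (p ++ u ++ s)).2 (runG rins S (p ++ w ++ s)).2 := by
  have := h _ (run_sorted p S hS)
  simp only [runG_append, this.1, true_and]
  exact this.2.ctx _ _

theorem run_Kn {u w : List ℕ} (h : Kn u w) (S : List ℕ) (hS : S.Pairwise (· ≤ ·)) :
    (runG rins S u).1 = (runG rins S w).1 ∧ Kn (runG rins S u).2 (runG rins S w).2 := by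
  induction h with
  | refl => exact ⟨rfl, .refl _⟩
  | symm _ ih => exact ⟨ih.1.symm, .symm ih.2⟩
  | trans _ _ ih1 ih2 => exact ⟨ih1.1.trans ih2.1, .trans ih1.2 ih2.2⟩
  | k1 p s x y z h1 h2 => exact run_ctx p s S hS (run_k1 h1 h2)
  | k2 p s x y z h1 h2 => exact run_ctx p s S hS (run_k2 h1 h2)

theorem Kn.length_eq {u w : List ℕ} (h : Kn u w) : u.length = w.length := by
  induction h with
  | refl => rfl
  | symm _ ih => exact ih.symm
  | trans _ _ ih1 ih2 => exact ih1.trans ih2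
  | k1 => simp
  | k2 => simp

theorem Pword_Kn {u w : List ℕ} (h : Kn u w) : Pword u = Pword w := by
  induction hN : u.length using Nat.strong_induction_on generalizing u w with
  | _ N ih =>
    have hl := h.length_eq
    by_cases hu : u = []
    · subst hu
      have : w = [] := by simpa using hl.symm
      rw [this]
    · have hw : w ≠ [] := by
        rintro rfl
        simp at hl; exact hu hl
      have := run_Kn h [] List.Pairwise.nil
      rw [Pword_ne u hu, Pword_ne w hw, this.1]
      rw [ih _ (by rw [← hN]; exact runG_length_nil rins (fun _ => rfl) u hu) this.2 rfl]
/-! ### Dual insertion -/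

/-- Dual insertion tableau. -/
def Dword (y : List ℕ) : List (List ℕ) := y.foldl (fun t v => tins dins v t) []

theorem Dword_ne (w : List ℕ) (hw : w ≠ []) :
    Dword w = (runG dins [] w).1 :: Dword (runG dins [] w).2 :=
  foldl_tins_nil dins (fun v => rfl) w hw

/-- Column reading word of a list of columns. -/
def colread (D : List (List ℕ)) : List ℕ := D.flatMap List.reverse

theorem Kn_move (x h : ℕ) (hx : x ≤ h) (l : List ℕ) (hl : ∀ a ∈ l, h < a)
    (hs : l.Pairwise (· > ·)) : Kn (x :: (l ++ [h])) (l ++ [x, h]) := by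
  induction l with
  | nil => exact .refl _
  | cons a l ih =>
    rw [List.pairwise_cons] at hs
    have h1 := (ih (fun a ha => hl a (by simp [ha])) hs.2).ctx [a] []
    refine Kn.trans ?_ (by simpa using h1)
    have ha := hl a (by simp)
    cases l with
    | nil => exact Kn.k2 [] [] x h a hx ha
    | cons b l =>
      have hb := hl b (by simp)
      have hab : a > b := hs.1 b (by simp)
      have := Kn.k2 [] (l ++ [h]) x b a (by omega) hab
      simpa using this

theorem dins_some_le {v c : ℕ} {S : List ℕ} (h : (dins v S).2 = some c) : v ≤ c ∧ c ∈ S := by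
  induction S with
  | nil => simp [dins] at h
  | cons x xs ih =>
    by_cases hv : v ≤ x
    · simp [dins, hv] at h; subst h; simp [hv]
    · simp [dins, hv] at h
      have := ih h
      simp [this]

theorem dins_mem {v t : ℕ} {S : List ℕ} (h : t ∈ (dins v S).1) : t = v ∨ t ∈ S := by
  induction S with
  | nil => simpa [dins] using h
  | cons x xs ih =>
    by_cases hv : v ≤ x
    · simp [dins, hv] at h; simp; tauto
    · simp [dins, hv] at h
      simp; tauto

theorem dins_sorted {v : ℕ} {S : List ℕ} (hS : S.Pairwise (· < ·)) :
    (dins v S).1.Pairwise (· < ·) := by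
  induction S with
  | nil => simp [dins]
  | cons x xs ih =>
    rw [List.pairwise_cons] at hS
    by_cases hv : v ≤ x
    · simp only [dins, hv, if_true, List.pairwise_cons]
      exact ⟨fun a ha => by have := hS.1 a ha; omega, hS.2⟩
    · simp only [dins, hv, if_false, List.pairwise_cons]
      refine ⟨fun a ha => ?_, ih hS.2⟩
      rcases dins_mem ha with rfl | h
      · omega
      · exact hS.1 _ h

theorem dins_none {v : ℕ} {S : List ℕ} (h : (dins v S).2 = none) : (dins v S).1 = S ++ [v] := by
  induction S with
  | nil => simp [dins]
  | cons x xs ih =>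
    by_cases hv : v ≤ x
    · simp [dins, hv] at h
    · simp [dins, hv] at h ⊢
      exact ih h

theorem dins_head (v : ℕ) (S : List ℕ) : ∃ a t, (dins v S).1 = a :: t ∧ a ≤ v := by
  cases S with
  | nil => exact ⟨v, [], rfl, le_rfl⟩
  | cons x xs =>
    by_cases hv : v ≤ x
    · exact ⟨v, xs, by simp [dins, hv], le_rfl⟩
    · exact ⟨x, (dins v xs).1, by simp [dins, hv], by omega⟩

theorem dins_Kn {x c : ℕ} {C : List ℕ} (hC : C.Pairwise (· < ·)) (h : (dins x C).2 = some c) :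
    Kn (x :: C.reverse) ((dins x C).1.reverse ++ [c]) := by
  induction C with
  | nil => simp [dins] at h
  | cons k t ih =>
    rw [List.pairwise_cons] at hC
    by_cases hv : x ≤ k
    · simp [dins, hv] at h; subst h
      simp only [dins, hv, if_true, List.reverse_cons]
      have := Kn_move x k hv t.reverse (by simpa using hC.1) (by
        rw [List.pairwise_reverse]; exact hC.2)
      simpa using this
    · simp [dins, hv] at h
      simp only [dins, hv, if_false, List.reverse_cons]
      have h1 := (ih hC.2 h).ctx [] [k]
      obtain ⟨a, u, hau, hax⟩ := dins_head x t
      have hxc := (dins_some_le h).1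
      have hka : k < a := by
        have : a ∈ (dins x t).1 := by rw [hau]; simp
        rcases dins_mem this with rfl | h6
        · omega
        · exact hC.1 _ h6
      refine Kn.trans (by simpa using h1) ?_
      rw [hau]
      have := Kn.k1 u.reverse [] k a c hka (by omega)
      simpa using this

/-- Column dominance: `C` followed by `E` is a legal pair of adjacent columns. -/
def Dom : List ℕ → List ℕ → Prop
  | _, [] => True
  | [], _ :: _ => False
  | h :: t, k :: u => h ≤ k ∧ Dom t u

/-- Legal list of columns. -/
def TabD : List (List ℕ) → Prop
  | [] => True
  | C :: R => C.Pairwise (· < ·) ∧ Dom C (R.headD []) ∧ TabD R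

theorem Dom_nil (C : List ℕ) : Dom C [] := by cases C <;> simp [Dom]

theorem Dom_dins_left (x : ℕ) (C E : List ℕ) (h : Dom C E) : Dom (dins x C).1 E := by
  induction C generalizing E with
  | nil => cases E with
    | nil => exact Dom_nil _
    | cons => simp [Dom] at h
  | cons k t ih =>
    cases E with
    | nil => exact Dom_nil _
    | cons e u =>
      simp only [Dom] at h
      by_cases hv : x ≤ k
      · simp only [dins, hv, if_true, Dom]
        exact ⟨by omega, h.2⟩
      · simp only [dins, hv, if_false, Dom]
        exact ⟨h.1, ih _ h.2⟩

theorem Dom_dins {x c : ℕ} (C E : List ℕ) (hC : C.Pairwise (· < ·)) (h : Dom C E)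
    (hc : (dins x C).2 = some c) : Dom (dins x C).1 (dins c E).1 := by
  induction C generalizing E with
  | nil => simp [dins] at hc
  | cons k t ih =>
    rw [List.pairwise_cons] at hC
    by_cases hv : x ≤ k
    · simp [dins, hv] at hc
      subst hc
      cases E with
      | nil => simp [dins, hv, Dom, Dom_nil]
      | cons e u =>
        simp only [Dom] at h
        simp [dins, hv, h.1, Dom, h.2]
    · simp [dins, hv] at hc
      have hkc := hC.1 _ (dins_some_le hc).2
      cases E with
      | nil => simp [dins, hv, Dom, Dom_nil, hkc.le]
      | cons e u =>
        simp only [Dom] at h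
        by_cases hce : c ≤ e
        · simp only [dins, hv, hce, if_true, if_false, Dom]
          exact ⟨hkc.le, Dom_dins_left _ _ _ h.2⟩
        · simp only [dins, hv, hce, if_false, Dom]
          exact ⟨h.1, ih _ hC.2 h.2 hc⟩

theorem headD_tins (c : ℕ) (R : List (List ℕ)) :
    (tins dins c R).headD [] = (dins c (R.headD [])).1 := by
  cases R <;> simp [tins]

theorem TabD_tins (x : ℕ) (D : List (List ℕ)) (h : TabD D) : TabD (tins dins x D) := by
  induction D generalizing x with
  | nil => simp [tins, dins, TabD, Dom]
  | cons C R ih =>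
    obtain ⟨h1, h2, h3⟩ := h
    simp only [tins]
    cases hc : (dins x C).2 with
    | none => exact ⟨dins_sorted h1, Dom_dins_left _ _ _ h2, h3⟩
    | some c =>
      refine ⟨dins_sorted h1, ?_, ih c h3⟩
      simp only [headD_tins]
      exact Dom_dins _ _ h1 h2 hc

theorem Kn_tins (x : ℕ) (D : List (List ℕ)) (h : TabD D) :
    Kn (x :: colread D) (colread (tins dins x D)) := by
  induction D generalizing x with
  | nil => exact .refl _
  | cons C R ih =>
    obtain ⟨h1, h2, h3⟩ := h
    simp only [tins, colread, List.flatMap_cons]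
    cases hc : (dins x C).2 with
    | none =>
      simp only [dins_none hc]
      simp
      exact .refl _
    | some c =>
      have e1 := (dins_Kn h1 hc).ctx [] (colread R)
      have e2 := (ih c h3).ctx (dins x C).1.reverse []
      refine Kn.trans (by simpa [colread] using e1) ?_
      simpa [colread] using e2

theorem Dword_spec (y : List ℕ) : TabD (Dword y) ∧ Kn y.reverse (colread (Dword y)) := by
  induction y using List.reverseRecOn with
  | nil => exact ⟨trivial, .refl _⟩
  | append_singleton y x ih =>
    have e : Dword (y ++ [x]) = tins dins x (Dword y) := by simp [Dword]
    rw [e]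
    refine ⟨TabD_tins _ _ ih.1, ?_⟩
    have := ih.2.ctx [x] []
    refine Kn.trans (by simpa using this) (Kn_tins x _ ih.1)

/-! ### Reading a transposed tableau -/

theorem rins_ge {b : ℕ} (S T : List ℕ) (h : ∀ s ∈ S, s ≤ b) :
    rins b (S ++ T) = (S ++ (rins b T).1, (rins b T).2) := by
  induction S with
  | nil => simp
  | cons s S ih =>
    have h1 : ¬ b < s := by have := h s (by simp); omega
    simp [rins, h1, ih (fun s hs => h s (by simp [hs]))]

theorem run_col (S t : List ℕ) (h : ℕ) (hS : ∀ s ∈ S, s ≤ h) (ht : (h :: t).Pairwise (· < ·)) :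
    runG rins S (h :: t).reverse = (S ++ [h], t.reverse) := by
  induction t generalizing h with
  | nil =>
    have := rins_ge S [] hS
    simp [rins] at this
    simp [runG, this]
  | cons k t ih =>
    rw [List.pairwise_cons] at ht
    have hk := ht.1 k (by simp)
    rw [List.reverse_cons, runG_append, ih k (fun s hs => by have := hS s hs; omega) ht.2]
    have := rins_ge S [k] hS
    simp [rins, hk] at this
    simp [runG, this]

theorem run_colread (D : List (List ℕ)) (S : List ℕ) (hD : TabD D)
    (hS : ∀ s ∈ S, ∀ h ∈ (D.headD []).head?, s ≤ h) :
    runG rins S (colread D) =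
      (S ++ D.filterMap List.head?, colread (D.map List.tail)) := by
  induction D generalizing S with
  | nil => simp [colread, runG]
  | cons C R ih =>
    obtain ⟨h1, h2, h3⟩ := hD
    cases C with
    | nil =>
      have e : R.headD [] = [] := by
        cases h : R.headD [] with
        | nil => rfl
        | cons => rw [h] at h2; simp [Dom] at h2
      have := ih S h3 (by rw [e]; simp)
      simpa [colread, List.filterMap_cons] using this
    | cons k t =>
      have hk : ∀ s ∈ S, s ≤ k := fun s hs => hS s hs k (by simp)
      have e1 := run_col S t k hk h1
      have e2 := ih (S ++ [k]) h3 (by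
        intro s hs h hh
        cases e : R.headD [] with
        | nil => rw [e] at hh; simp at hh
        | cons a b =>
          rw [e] at hh h2
          simp [Dom] at hh h2
          subst hh
          rcases List.mem_append.1 hs with h5 | h5
          · have := hk s h5; omega
          · simp at h5; omega)
      simp only [colread] at e2
      simp only [colread, List.flatMap_cons, runG_append, e1, e2]
      simp

theorem Dom_tail (C E : List ℕ) (h : Dom C E) : Dom C.tail E.tail := by
  cases C <;> cases E <;> simp [Dom, Dom_nil] at h ⊢
  exact h.2

theorem TabD_tail (D : List (List ℕ)) (h : TabD D) : TabD (D.map List.tail) := by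
  induction D with
  | nil => trivial
  | cons C R ih =>
    obtain ⟨h1, h2, h3⟩ := h
    refine ⟨?_, ?_, ih h3⟩
    · exact h1.sublist (List.tail_sublist C)
    · have := Dom_tail _ _ h2
      cases R <;> simpa using this

theorem colread_of_nil (D : List (List ℕ)) (hD : TabD D) (h : D.headD [] = []) :
    colread D = [] := by
  induction D with
  | nil => rfl
  | cons C R ih =>
    obtain ⟨h1, h2, h3⟩ := hD
    simp at h
    subst h
    have e : R.headD [] = [] := by
      cases h : R.headD [] with
      | nil => rfl
      | cons => rw [h] at h2; simp [Dom] at h2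
    simpa [colread] using ih h3 e

theorem Pword_colread (D : List (List ℕ)) (hD : TabD D) : Pword (colread D) = transposeT D := by
  induction hN : (D.headD []).length generalizing D with
  | zero =>
    have e : D.headD [] = [] := by simpa using hN
    rw [colread_of_nil D hD e]
    have : D.getD 0 [] = [] := by cases D <;> simpa using e
    simp only [Pword, transposeT, this]
    rfl
  | succ N ih =>
    cases D with
    | nil => simp at hN
    | cons C R =>
      cases C with
      | nil => simp at hN
      | cons k t =>
        have hne : colread ((k :: t) :: R) ≠ [] := by simp [colread]
        rw [Pword_ne _ hne, run_colread _ _ hD (by simp)]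
        simp only
        rw [ih _ (TabD_tail _ hD) (by simpa using hN)]
        simp only [transposeT, List.map_cons, List.getD_cons_zero, List.length_cons,
          List.range_succ_eq_map, List.tail_cons]
        have e0 : ∀ a, (fun row : List ℕ => row[a]?) ∘ List.tail =
            fun row : List ℕ => row[a + 1]? := by
          intro a; funext row; simp
        have e1 : (List.head? : List ℕ → Option ℕ) = fun row => row[0]? := by
          funext row; simp [List.head?_eq_getElem?]
        have e2 : ∀ a, List.filterMap (fun row : List ℕ => row[a]?) (t :: R.map List.tail) =
            List.filterMap (fun row : List ℕ => row[a + 1]?) ((k :: t) :: R) := by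
          intro a
          rw [← e0 a, ← List.filterMap_map]
          rfl
        simp only [e2, e1, List.nil_append, List.map_map, Function.comp_def]
/-! ### Recording tableau -/

/-- One step of `rsk`. -/
def stepf (PQ : List (List ℕ) × List (List ℕ)) (ab : ℕ × ℕ) :
    List (List ℕ) × List (List ℕ) :=
  (insRow ab.2 PQ.1, addBox PQ.2 (growIdx PQ.1 (insRow ab.2 PQ.1)) ab.1)

theorem rsk_eq (w : List (ℕ × ℕ)) : rsk w = w.foldl stepf ([], []) := rfl

theorem growIdx_cons (r r' : List ℕ) (P P' : List (List ℕ)) :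
    growIdx (r :: P) (r' :: P') = if r.length ≠ r'.length then 0 else growIdx P P' + 1 := by
  unfold growIdx
  rw [List.length_cons, List.range_succ_eq_map, List.findIdx_cons, List.findIdx_map]
  by_cases h : r.length = r'.length <;> simp [h, Function.comp_def]

theorem rins_length (v : ℕ) (S : List ℕ) :
    (rins v S).1.length = S.length + (if (rins v S).2 = none then 1 else 0) := by
  induction S with
  | nil => simp [rins]
  | cons x xs ih =>
    by_cases hv : v < x
    · simp [rins, hv]
    · simp [rins, hv, ih]; omega

theorem stepf_nil (a b : ℕ) : stepf ([], []) (a, b) = ([[b]], [[a]]) := by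
  simp [stepf, insRow, addBox]

theorem stepf_cons (S q : List ℕ) (P Q : List (List ℕ)) (a b : ℕ) :
    stepf (S :: P, q :: Q) (a, b) =
      match (rins b S).2 with
      | none => ((rins b S).1 :: P, (q ++ [a]) :: Q)
      | some c => ((rins b S).1 :: (stepf (P, Q) (a, c)).1, q :: (stepf (P, Q) (a, c)).2) := by
  have hl := rins_length b S
  simp only [stepf, insRow_eq, tins, growIdx_cons]
  cases h : (rins b S).2 with
  | none =>
    rw [h] at hl
    simp [hl, addBox]
  | some c =>
    rw [h] at hl
    simp only [hl]
    simp [addBox]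
    split <;> simp_all

/-- Insert a biword in one row: final row, recorded appended letters, bumped biword. -/
def brun : List ℕ → List (ℕ × ℕ) → List ℕ × List ℕ × List (ℕ × ℕ)
  | S, [] => (S, [], [])
  | S, p :: w =>
    ((brun (rins p.2 S).1 w).1,
     (match (rins p.2 S).2 with
      | none => [p.1]
      | some _ => []) ++ (brun (rins p.2 S).1 w).2.1,
     (match (rins p.2 S).2 with
      | none => []
      | some c => [(p.1, c)]) ++ (brun (rins p.2 S).1 w).2.2)

theorem brun_append (u w : List (ℕ × ℕ)) (S : List ℕ) :
    brun S (u ++ w) = ((brun (brun S u).1 w).1, (brun S u).2.1 ++ (brun (brun S u).1 w).2.1,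
      (brun S u).2.2 ++ (brun (brun S u).1 w).2.2) := by
  induction u generalizing S with
  | nil => simp [brun]
  | cons p u ih => simp [brun, ih]

theorem foldl_stepf_cons (w : List (ℕ × ℕ)) (S q : List ℕ) (P Q : List (List ℕ)) :
    (w.foldl stepf (S :: P, q :: Q)).2 =
      (q ++ (brun S w).2.1) :: ((brun S w).2.2.foldl stepf (P, Q)).2 := by
  induction w generalizing S q P Q with
  | nil => simp [brun]
  | cons p w ih =>
    obtain ⟨a, b⟩ := p
    rw [List.foldl_cons, stepf_cons]
    simp only [brun]
    cases h : (rins b S).2 with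
    | none => simp only [ih]; simp
    | some c => simp only [ih]; simp

theorem rsk_ne (w : List (ℕ × ℕ)) (hw : w ≠ []) :
    (rsk w).2 = (brun [] w).2.1 :: (rsk (brun [] w).2.2).2 := by
  cases w with
  | nil => exact absurd rfl hw
  | cons p w =>
    obtain ⟨a, b⟩ := p
    rw [rsk_eq, rsk_eq, List.foldl_cons, stepf_nil, foldl_stepf_cons]
    simp [brun, rins]

theorem brun_length (w : List (ℕ × ℕ)) (S : List ℕ) : (brun S w).2.2.length ≤ w.length := by
  induction w generalizing S with
  | nil => simp [brun]
  | cons p w ih =>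
    have := ih (rins p.2 S).1
    simp only [brun]
    cases (rins p.2 S).2 <;> simp <;> omega

theorem brun_length_nil (w : List (ℕ × ℕ)) (hw : w ≠ []) :
    (brun [] w).2.2.length < w.length := by
  cases w with
  | nil => exact absurd rfl hw
  | cons p w =>
    have := brun_length w [p.2]
    simp [brun, rins]; omega

theorem rsk_fst (w : List (ℕ × ℕ)) : (rsk w).1 = Pword (w.map Prod.snd) := by
  have : ∀ (w : List (ℕ × ℕ)) (P Q : List (List ℕ)), (w.foldl stepf (P, Q)).1 =
      (w.map Prod.snd).foldl (fun t v => insRow v t) P := by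
    intro w
    induction w with
    | nil => simp
    | cons p w ih =>
      intro P Q
      simp only [List.foldl_cons, List.map_cons]
      rw [← ih]
      rfl
  exact this w [] []

/-! ### Local rules -/

/-- Increasing list of the indices `< n` where `X` holds. -/
def incl (n : ℕ) (X : ℕ → Bool) : List ℕ := (List.range n).filter X

theorem incl_succ (n : ℕ) (X : ℕ → Bool) :
    incl (n + 1) X = incl n X ++ (if X n then [n] else []) := by
  simp only [incl, List.range_succ, List.filter_append]
  congr 1
  cases h : X n <;> simp [h]

theorem incl_lt {n a : ℕ} {X : ℕ → Bool} (h : a ∈ incl n X) : a < n := by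
  simp [incl] at h; exact h.1

theorem incl_sorted (n : ℕ) (X : ℕ → Bool) : (incl n X).Pairwise (· < ·) :=
  List.Pairwise.filter _ List.pairwise_lt_range

/-- Row with `V j` entries `j` for each `j < m`. -/
def rowOf (m : ℕ) (V : ℕ → ℕ) : List ℕ := (List.range m).flatMap fun j => List.replicate (V j) j

theorem rowOf_succ (m : ℕ) (V : ℕ → ℕ) :
    rowOf (m + 1) V = rowOf m V ++ List.replicate (V m) m := by
  simp [rowOf, List.range_succ]

theorem rowOf_lt {m a : ℕ} {V : ℕ → ℕ} (h : a ∈ rowOf m V) : a < m := by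
  simp only [rowOf, List.mem_flatMap, List.mem_range, List.mem_replicate] at h
  obtain ⟨j, hj, _, rfl⟩ := h
  exact hj

/-- Letters of one time step: `(a, j)` with `j` decreasing. -/
def dec (a m : ℕ) (X : ℕ → Bool) : List (ℕ × ℕ) := (incl m X).reverse.map fun j => (a, j)

theorem dec_succ (a m : ℕ) (X : ℕ → Bool) :
    dec a (m + 1) X = (if X m then [(a, m)] else []) ++ dec a m X := by
  simp only [dec, incl_succ]
  cases X m <;> simp

theorem time_aux (a : ℕ) (X X' H : ℕ → Bool) (V V' : ℕ → ℕ) (h0 : H 0 = false)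
    (hH : ∀ j, H (j + 1) = (X j || (H j && decide (V j = 0))))
    (hX : ∀ j, X' j = (H j && (decide (0 < V j) || X j)))
    (hV : ∀ j, V' j = V j + (X j).toNat - (X' j).toNat) (m : ℕ) :
    (H m = false ∧ ∀ T, brun (rowOf m V ++ T) (dec a m X) = (rowOf m V' ++ T, [], dec a m X')) ∨
    (H m = true ∧ ∃ l1 l2, dec a m X = (a, l1) :: l2 ∧ l1 < m ∧ (∀ s ∈ rowOf m V, s ≤ l1) ∧
      ∀ T, brun (rowOf m V ++ l1 :: T) l2 = (rowOf m V' ++ T, [], dec a m X')) := by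
  induction m with
  | zero => left; simp [h0, rowOf, dec, incl, brun]
  | succ m ih =>
    have hHm := hH m
    have hXm := hX m
    have hVm := hV m
    rcases ih with ⟨h1, h2⟩ | ⟨h1, l1, l2, h3, h4, h5, h6⟩
    · rw [h1] at hHm hXm
      simp at hHm hXm
      rw [hXm] at hVm
      cases hx : X m with
      | false =>
        rw [hx] at hHm hVm
        simp at hVm
        left
        refine ⟨hHm, fun T => ?_⟩
        simp [dec_succ, rowOf_succ, hx, hXm, hVm, h2]
      | true =>
        rw [hx] at hHm hVm
        simp at hVm
        right
        refine ⟨hHm, m, dec a m X, by simp [dec_succ, hx], by omega, ?_, fun T => ?_⟩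
        · intro s hs
          rw [rowOf_succ, List.mem_append] at hs
          rcases hs with hs | hs
          · exact (rowOf_lt hs).le
          · simp at hs; omega
        · simp [dec_succ, rowOf_succ, hXm, hVm, h2, List.replicate_succ']
    · rw [h1] at hHm hXm
      simp at hHm hXm
      have big : ∀ T, brun (rowOf m V ++ m :: T) ((a, l1) :: l2) =
          (rowOf m V' ++ T, [], (a, m) :: dec a m X') := by
        intro T
        have := rins_ge (rowOf m V) (m :: T) h5
        simp [rins, h4] at this
        simp [brun, this, h6]
      cases hx : X m with
      | false =>
        simp [hx] at hHm hXm hVm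
        by_cases hv : V m = 0
        · right
          simp [hv] at hHm hXm hVm
          refine ⟨hHm, l1, l2, by simp [dec_succ, hx, h3], by omega, ?_, fun T => ?_⟩
          · simpa [rowOf_succ, hv] using h5
          · simp [dec_succ, rowOf_succ, hXm, hVm, hv, h6]
        · left
          have hp : 0 < V m := by omega
          simp [hv, hp] at hHm hXm
          obtain ⟨k, hk⟩ : ∃ k, V m = k + 1 := ⟨V m - 1, by omega⟩
          simp [hXm, hk] at hVm
          refine ⟨hHm, fun T => ?_⟩
          have := big (List.replicate k m ++ T)
          simp [dec_succ, rowOf_succ, hx, hXm, hVm, hk, List.replicate_succ, h3, this]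
      | true =>
        right
        simp [hx] at hHm hXm
        simp [hx, hXm] at hVm
        refine ⟨hHm, m, dec a m X, by simp [dec_succ, hx], by omega, ?_, fun T => ?_⟩
        · intro s hs
          rw [rowOf_succ, List.mem_append] at hs
          rcases hs with hs | hs
          · exact (rowOf_lt hs).le
          · simp at hs; omega
        · have := big (List.replicate (V m) m ++ T)
          have e : rowOf (m + 1) V ++ m :: T = rowOf m V ++ m :: (List.replicate (V m) m ++ T) := by
            rw [rowOf_succ, List.append_assoc, ← List.cons_append, ← List.replicate_succ,
              List.replicate_succ']
            simp
          rw [e, h3, this]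
          simp [dec_succ, rowOf_succ, hXm, hVm]

theorem time_step (a : ℕ) (X X' H : ℕ → Bool) (V V' : ℕ → ℕ) (h0 : H 0 = false)
    (hH : ∀ j, H (j + 1) = (X j || (H j && decide (V j = 0))))
    (hX : ∀ j, X' j = (H j && (decide (0 < V j) || X j)))
    (hV : ∀ j, V' j = V j + (X j).toNat - (X' j).toNat) (m : ℕ) :
    brun (rowOf m V) (dec a m X) = (rowOf m V', if H m then [a] else [], dec a m X') := by
  rcases time_aux a X X' H V V' h0 hH hX hV m with ⟨h1, h2⟩ | ⟨h1, l1, l2, h3, h4, h5, h6⟩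
  · have := h2 []
    simp only [List.append_nil] at this
    rw [this, h1]; simp
  · have := rins_ge (rowOf m V) [] h5
    simp [rins] at this
    have h7 := h6 []
    simp only [List.append_nil] at h7
    rw [h3, brun]
    simp [this, h7, h1]

theorem dins_gt {b : ℕ} (S T : List ℕ) (h : ∀ s ∈ S, s < b) :
    dins b (S ++ T) = (S ++ (dins b T).1, (dins b T).2) := by
  induction S with
  | nil => simp
  | cons s S ih =>
    have h1 : ¬ b ≤ s := by have := h s (by simp); omega
    simp [dins, h1, ih (fun s hs => h s (by simp [hs]))]

theorem drun_gt (l C : List ℕ) (h : (C ++ l).Pairwise (· < ·)) :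
    runG dins C l = (C ++ l, []) := by
  induction l generalizing C with
  | nil => simp [runG]
  | cons b l ih =>
    have h1 : ∀ s ∈ C, s < b := fun s hs => (List.pairwise_append.1 h).2.2 s hs b (by simp)
    have := dins_gt C [] h1
    simp [dins] at this
    simp only [runG, this]
    rw [ih (C ++ [b]) (by simpa using h)]
    simp

theorem col_aux (X X' H H' : ℕ → Bool) (V : ℕ → ℕ) (h0 : V 0 = 0)
    (hH : ∀ i, H' i = (X i || (H i && decide (V i = 0))))
    (hX : ∀ i, X' i = (H i && (decide (0 < V i) || X i)))
    (hV : ∀ i, V (i + 1) = V i + (X i).toNat - (X' i).toNat) (n : ℕ) :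
    ∃ la lb C, incl n X = la ++ lb ∧ lb.length = V n ∧ C ++ lb = incl n H' ∧
      ∀ T, runG dins (incl n H ++ T) la = (C ++ T, incl n X') := by
  induction n with
  | zero => exact ⟨[], [], [], by simp [incl, h0, runG]⟩
  | succ n ih =>
    obtain ⟨la, lb, C, h1, h2, h3, h4⟩ := ih
    have hHn := hH n
    have hXn := hX n
    have hVn := hV n
    have hs := incl_sorted n H'
    have hlt : ∀ a ∈ C ++ lb, a < n := fun a ha => incl_lt (h3 ▸ ha)
    cases hh : H n with
    | false =>
      simp [hh] at hHn hXn
      simp [hXn] at hVn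
      cases hx : X n with
      | false =>
        rw [hx] at hHn hVn
        exact ⟨la, lb, C, by simp [incl_succ, hx, h1], by simp [hVn, h2],
          by simp [incl_succ, hHn, h3], by simp [incl_succ, hh, hXn, h4]⟩
      | true =>
        rw [hx] at hHn hVn
        exact ⟨la, lb ++ [n], C, by simp [incl_succ, hx, h1], by simp [hVn, h2],
          by simp [incl_succ, hHn, ← h3], by simp [incl_succ, hh, hXn, h4]⟩
    | true =>
      simp [hh] at hHn hXn
      cases lb with
      | nil =>
        simp at h2 h3
        rw [← h2] at hHn hXn hVn
        simp at hHn hXn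
        simp [hXn] at hVn
        cases hx : X n with
        | false =>
          rw [hx] at hXn
          exact ⟨la, [], C ++ [n], by simp [incl_succ, hx, h1], by simp [hVn],
            by simp [incl_succ, hHn, h3], by simp [incl_succ, hh, hXn, h4]⟩
        | true =>
          rw [hx] at hXn
          refine ⟨la ++ [n], [], C ++ [n], by simp [incl_succ, hx, h1], by simp [hVn],
            by simp [incl_succ, hHn, h3], fun T => ?_⟩
          have := dins_gt C (n :: T) (fun s hs => hlt s (by simp [hs]))
          simp [dins] at this
          simp [incl_succ, hh, hXn, h4, runG_append, runG, this]
      | cons b lb =>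
        have hp : 0 < V n := by rw [← h2]; simp
        have hp' : V n ≠ 0 := by omega
        simp [hp, hp'] at hHn hXn
        simp [hXn] at hVn
        have hb : b ≤ n := (hlt b (by simp)).le
        have hCb : ∀ s ∈ C, s < b := by
          rw [← h3] at hs
          exact fun s hs' => (List.pairwise_append.1 hs).2.2 s hs' b (by simp)
        have key : ∀ T, runG dins (incl (n + 1) H ++ T) (la ++ [b]) =
            (C ++ [b] ++ T, incl (n + 1) X') := by
          intro T
          have := dins_gt C (n :: T) hCb
          simp [dins, hb] at this
          simp [incl_succ, hh, hXn, h4, runG_append, runG, this]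
        cases hx : X n with
        | false =>
          rw [hx] at hHn hVn
          simp at hVn h2
          exact ⟨la ++ [b], lb, C ++ [b], by simp [incl_succ, hx, h1], by omega,
            by simp [incl_succ, hHn, ← h3], key⟩
        | true =>
          rw [hx] at hHn hVn
          simp at hVn h2
          exact ⟨la ++ [b], lb ++ [n], C ++ [b], by simp [incl_succ, hx, h1], by simp; omega,
            by simp [incl_succ, hHn, ← h3], key⟩

theorem col_step (X X' H H' : ℕ → Bool) (V : ℕ → ℕ) (h0 : V 0 = 0)
    (hH : ∀ i, H' i = (X i || (H i && decide (V i = 0))))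
    (hX : ∀ i, X' i = (H i && (decide (0 < V i) || X i)))
    (hV : ∀ i, V (i + 1) = V i + (X i).toNat - (X' i).toNat) (n : ℕ) :
    runG dins (incl n H) (incl n X) = (incl n H', incl n X') := by
  obtain ⟨la, lb, C, h1, h2, h3, h4⟩ := col_aux X X' H H' V h0 hH hX hV n
  have := h4 []
  simp only [List.append_nil] at this
  rw [h1, runG_append, this]
  simp only
  rw [drun_gt lb C (by rw [h3]; exact incl_sorted _ _), h3]
  simp

/-! ### The grid -/

/-- Horizontal edges from the vertical ones at a given time. -/
def Hof (X : ℕ → Bool) (V : ℕ → ℕ) : ℕ → Bool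
  | 0 => false
  | j + 1 => X j || (Hof X V j && decide (V j = 0))

/-- Vertical edges. -/
def Vf (X : ℕ → ℕ → Bool) : ℕ → ℕ → ℕ
  | 0 => fun _ => 0
  | i + 1 => fun j => Vf X i j + (X i j).toNat -
      (Hof (X i) (Vf X i) j && (decide (0 < Vf X i j) || X i j)).toNat

/-- Horizontal edges. -/
def Hf (X : ℕ → ℕ → Bool) (i j : ℕ) : Bool := Hof (X i) (Vf X i) j

/-- Bumped points. -/
def Xf (X : ℕ → ℕ → Bool) (i j : ℕ) : Bool := Hf X i j && (decide (0 < Vf X i j) || X i j)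

/-- Burge word of a point set. -/
def wX (n m : ℕ) (X : ℕ → ℕ → Bool) : List (ℕ × ℕ) :=
  (List.range n).flatMap fun i => dec i m (X i)

/-- The other word. -/
def yX (n m : ℕ) (X : ℕ → ℕ → Bool) : List ℕ :=
  (List.range m).flatMap fun j => incl n fun i => X i j

theorem brun_wX (n m : ℕ) (X : ℕ → ℕ → Bool) :
    brun [] (wX n m X) = (rowOf m (Vf X n), incl n fun i => Hf X i m, wX n m (Xf X)) := by
  induction n with
  | zero => simp [wX, incl, brun, rowOf, Vf]
  | succ n ih =>
    have e : ∀ Y, wX (n + 1) m Y = wX n m Y ++ dec n m (Y n) := by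
      intro Y; simp [wX, List.range_succ]
    rw [e, e, brun_append, ih]
    simp only
    rw [time_step n (X n) (Xf X n) (Hf X n) (Vf X n) (Vf X (n + 1)) rfl (fun _ => rfl)
      (fun _ => rfl) (fun _ => rfl) m, incl_succ]

theorem drun_yX (n m : ℕ) (X : ℕ → ℕ → Bool) :
    runG dins [] (yX n m X) = (incl n fun i => Hf X i m, yX n m (Xf X)) := by
  induction m with
  | zero => simp [yX, incl, runG, Hf, Hof]
  | succ m ih =>
    have e : ∀ Y, yX n (m + 1) Y = yX n m Y ++ incl n fun i => Y i m := by
      intro Y; simp [yX, List.range_succ]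
    rw [e, e, runG_append, ih]
    simp only
    rw [col_step (fun i => X i m) (fun i => Xf X i m) (fun i => Hf X i m)
      (fun i => Hf X i (m + 1)) (fun i => Vf X i m) rfl (fun _ => rfl)
      (fun _ => rfl) (fun _ => rfl) n]

theorem wX_nil_iff (n m : ℕ) (X : ℕ → ℕ → Bool) : wX n m X = [] ↔ yX n m X = [] := by
  simp only [wX, yX, dec, incl, List.flatMap_eq_nil_iff, List.map_eq_nil_iff,
    List.reverse_eq_nil_iff, List.filter_eq_nil_iff, List.mem_range]
  exact ⟨fun h j hj i hi => h i hi j hj, fun h i hi j hj => h j hj i hi⟩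

theorem rsk_wX (n m : ℕ) (X : ℕ → ℕ → Bool) : (rsk (wX n m X)).2 = Dword (yX n m X) := by
  induction hN : (wX n m X).length using Nat.strong_induction_on generalizing X with
  | _ N ih =>
    by_cases hw : wX n m X = []
    · rw [hw, (wX_nil_iff n m X).1 hw]; rfl
    · have hy : yX n m X ≠ [] := fun h => hw ((wX_nil_iff n m X).2 h)
      have hlen := brun_length_nil _ hw
      rw [rsk_ne _ hw, Dword_ne _ hy]
      rw [brun_wX] at hlen ⊢
      rw [drun_yX]
      simp only at hlen ⊢
      rw [ih _ (hN ▸ hlen) (Xf X) rfl]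

theorem lexLt_eq {l₁ l₂ : List (ℕ × ℕ)} (h1 : l₁.Pairwise lexLt) (h2 : l₂.Pairwise lexLt)
    (h : ∀ p, p ∈ l₁ ↔ p ∈ l₂) : l₁ = l₂ := by
  have irr : ∀ {l : List (ℕ × ℕ)}, l.Pairwise lexLt → l.Nodup := by
    intro l hl
    refine hl.imp ?_
    rintro a b hab rfl
    simp [lexLt] at hab
  have hp : l₁.Perm l₂ := (List.perm_ext_iff_of_nodup (irr h1) (irr h2)).2 h
  refine List.Perm.eq_of_pairwise ?_ h1 h2 hp
  intro a b _ _ hab hba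
  simp only [lexLt] at hab hba
  omega

/-- For a single-column lexicographic bitableau `T ∈ B_{(1^r)}(n,m)`,
`bRSK(T) = (P(w(T)), P(u'(T)))`. -/
theorem stmt_10 (n m r : ℕ) (hn : 1 ≤ n) (hm : 1 ≤ m)
    (L : List (ℕ × ℕ)) (hL : IsColBitab n m r L) :
    bRSK n L = (Pword (wCol n L), Pword (uCol' m L)) := by
  obtain ⟨hlen, hb, hc⟩ := hL
  have hp : L.Pairwise lexLt := by
    haveI : IsTrans (ℕ × ℕ) lexLt := ⟨fun a b c h1 h2 => by simp only [lexLt] at *; omega⟩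
    exact List.isChain_iff_pairwise.1 hc
  let X : ℕ → ℕ → Bool := fun i j => decide ((i, j) ∈ L)
  have hrow : ∀ k, (L.filter fun p => decide (p.1 = k)) = (incl (m + 1) (X k)).map (fun j => (k, j)) := by
    intro k
    refine lexLt_eq (hp.filter _) ?_ ?_
    · rw [List.pairwise_map]
      exact (incl_sorted _ _).imp (fun h => Or.inr ⟨rfl, h⟩)
    · rintro ⟨a, b⟩
      simp only [incl, X, List.mem_filter, List.mem_map, List.mem_range, decide_eq_true_eq, Prod.mk.injEq]
      constructor
      · rintro ⟨h, rfl⟩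
        exact ⟨b, ⟨by have := (hb _ h).2.2; simp at this; omega, h⟩, rfl, rfl⟩
      · rintro ⟨j, ⟨_, h⟩, rfl, rfl⟩
        exact ⟨h, rfl⟩
  have hcol : ∀ k, (L.filter fun p => decide (p.2 = k)) = (incl (n + 1) (fun i => X i k)).map (fun i => (i, k)) := by
    intro k
    refine lexLt_eq (hp.filter _) ?_ ?_
    · rw [List.pairwise_map]
      exact (incl_sorted _ _).imp (fun h => Or.inl h)
    · rintro ⟨a, b⟩
      simp only [incl, X, List.mem_filter, List.mem_map, List.mem_range, decide_eq_true_eq, Prod.mk.injEq]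
      constructor
      · rintro ⟨h, rfl⟩
        exact ⟨a, ⟨by have := (hb _ h).1.2; simp at this; omega, h⟩, rfl, rfl⟩
      · rintro ⟨j, ⟨_, h⟩, rfl, rfl⟩
        exact ⟨h, rfl⟩
  have hw : burge n L = wX (n + 1) (m + 1) X := by
    have e0 : incl (m + 1) (X 0) = [] := by
      simp only [incl, List.filter_eq_nil_iff, X, decide_eq_true_eq]
      intro j _ h
      have := (hb _ h).1.1
      simp at this
    simp only [burge, wX, hrow]
    rw [List.range_succ_eq_map, List.flatMap_cons, List.flatMap_map]
    simp [dec, e0]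
  have hu : uCol' m L = (yX (n + 1) (m + 1) X).reverse := by
    have e0 : incl (n + 1) (fun i => X i 0) = [] := by
      simp only [incl, List.filter_eq_nil_iff, X, decide_eq_true_eq]
      intro j _ h
      have := (hb _ h).2.1
      simp at this
    simp only [uCol', yX, hcol]
    rw [List.range_succ_eq_map, List.flatMap_cons, List.flatMap_map, e0, List.nil_append,
      List.reverse_flatMap]
    simp [Function.comp_def]
  have hwc : wCol n L = (burge n L).map Prod.snd := by
    simp [wCol, burge, List.map_flatMap]
  have hD := Dword_spec (yX (n + 1) (m + 1) X)
  rw [bRSK, rsk_fst, hwc, hu, Pword_Kn hD.2, Pword_colread _ hD.1, hw, rsk_wX]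
end

section
/- Let λ be a partition, m ≥ 1, and T ∈ B'_λ(2,m), i.e., T ∈ B_λ(2,m) with w'(T) Yamanouchi. Let α = (α_1, α_2, …) where α_i is the number of boxes in row i of T with first coordinate 1. Define φ(T) as follows: if the first row of T contains a box with first coordinate 1, let T' be the filling obtained by changing the entry (1,a) of the rightmost such box to (2,a), and set φ(T) = T' if T' ∈ B'_λ(2,m) (i.e., T' is a lexicographic bitableau with w'(T') Yamanouchi) and φ(T) = 0 otherwise; if the first row contains no box with first coordinate 1, set φ(T) = 0. Then φ(T) = 0 if and only if T is a Kronecker tableau, i.e., if and only if: (I) α_1 = α_2, or (II) α_1 > α_2 and either (i) the number of boxes in the second row of T with entry (2,1) equals α_1 − α_2, or (ii) the number of boxes in the first row of T with entry (2,2) equals α_1 − α_2. -/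
/-- `T` (a total function on positions, row & column both 0-indexed) is a lexicographic
bitableau of shape `lam` with entries in `[n] × [m]`: on the cells of `lam`, entries are pairs
in `{1,…,n} × {1,…,m}`, weakly increasing along rows and strictly increasing down columns
for the lexicographic order. -/
def IsBitabT (lam : YoungDiagram) (n m : ℕ) (T : ℕ → ℕ → ℕ × ℕ) : Prop :=
  (∀ i j, (i, j) ∈ lam → (1 ≤ (T i j).1 ∧ (T i j).1 ≤ n) ∧ (1 ≤ (T i j).2 ∧ (T i j).2 ≤ m)) ∧
  (∀ i j j', (i, j') ∈ lam → j ≤ j' → lexLe (T i j) (T i j')) ∧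
  (∀ i i' j, (i', j) ∈ lam → i < i' → lexLt (T i j) (T i' j))

/-- `i`-th entry of the `a`-weight of `T`: the number of boxes whose entry has first coordinate `i`. -/
def aWtT (lam : YoungDiagram) (T : ℕ → ℕ → ℕ × ℕ) (i : ℕ) : ℕ :=
  (lam.cells.filter fun c => (T c.1 c.2).1 = i).card

/-- `j`-th entry of the `b`-weight of `T`: the number of boxes whose entry has second coordinate `j`. -/
def bWtT (lam : YoungDiagram) (T : ℕ → ℕ → ℕ × ℕ) (j : ℕ) : ℕ :=
  (lam.cells.filter fun c => (T c.1 c.2).2 = j).card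

/-- The list of boxes of `T` in sort-by-top reading order: boxes with first coordinate
`k = 1, …, n` in increasing order, within each group rows from bottom to top, left to right
within each row. -/
def wBoxes (lam : YoungDiagram) (n : ℕ) (T : ℕ → ℕ → ℕ × ℕ) : List (ℕ × ℕ) :=
  (List.range n).flatMap fun k =>
    ((List.range (lam.colLen 0)).reverse).flatMap fun r =>
      ((List.range (lam.rowLen r)).filter fun c => decide ((T r c).1 = k + 1)).map fun c => (r, c)

/-- The sort-by-top reading word `w(T)`: the second coordinates of the boxes, in sort-by-top
reading order. -/
def wWordT (lam : YoungDiagram) (n : ℕ) (T : ℕ → ℕ → ℕ × ℕ) : List ℕ :=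
  (wBoxes lam n T).map fun c => (T c.1 c.2).2

/-- Under the `i`-bracketing rule (each letter `i` becomes `)`, each letter `i+1` becomes `(`,
other letters are ignored), the letter at position `p` of `w` is an unmatched `)` (letter `i`):
equivalently, every window of `w` ending at `p` contains strictly more letters `i` than
letters `i+1`. -/
def UnmatchedClose (w : List ℕ) (i p : ℕ) : Prop :=
  p < w.length ∧ w.getD p 0 = i ∧
    ∀ q, q ≤ p →
      ((w.drop q).take (p + 1 - q)).count (i + 1) < ((w.drop q).take (p + 1 - q)).count i

/-- Under the `i`-bracketing rule, the letter at position `p` of `w` is an unmatched `(`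
(letter `i+1`): equivalently, every window of `w` starting at `p` contains strictly more
letters `i+1` than letters `i`. -/
def UnmatchedOpen (w : List ℕ) (i p : ℕ) : Prop :=
  p < w.length ∧ w.getD p 0 = i + 1 ∧
    ∀ q, p ≤ q → q < w.length →
      ((w.drop p).take (q + 1 - p)).count i < ((w.drop p).take (q + 1 - p)).count (i + 1)

/-- The reversed sort-by-top reading word `w'(T)`: for `k = n, n−1, …, 1` in decreasing order,
the second coordinates of the boxes with first coordinate `k`, read row by row from the bottom
row to the top row, left to right within each row. -/
def w'WordT (lam : YoungDiagram) (n : ℕ) (T : ℕ → ℕ → ℕ × ℕ) : List ℕ :=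
  (((List.range n).reverse).flatMap fun k =>
    ((List.range (lam.colLen 0)).reverse).flatMap fun r =>
      ((List.range (lam.rowLen r)).filter fun c => decide ((T r c).1 = k + 1)).map
        fun c => (r, c)).map fun c => (T c.1 c.2).2

/-- Membership in `B'_λ(2,m)`: a lexicographic bitableau of shape `λ` with entries in
`{1,2} × [m]` whose reading word `w'(T)` is Yamanouchi. -/
def IsBitab' (lam : YoungDiagram) (m : ℕ) (T : ℕ → ℕ → ℕ × ℕ) : Prop :=
  IsBitabT lam 2 m T ∧ Yamanouchi (w'WordT lam 2 T)

/-- The number of boxes in row `i` (1-indexed) of `T` whose entry has first coordinate `1`. -/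
def alphaRow (lam : YoungDiagram) (T : ℕ → ℕ → ℕ × ℕ) (i : ℕ) : ℕ :=
  (lam.cells.filter fun c => c.1 = i - 1 ∧ (T c.1 c.2).1 = 1).card

theorem yam_nil : Yamanouchi [] := by
  intro i hi s hs
  simp at hs
  simp [hs]

theorem yam_cons (x : ℕ) (l : List ℕ) : Yamanouchi (x :: l) ↔
    Yamanouchi l ∧ ∀ i, 1 ≤ i → (x :: l).count (i + 1) ≤ (x :: l).count i := by
  unfold Yamanouchi
  constructor
  · intro h
    refine ⟨fun i hi s hs => h i hi s ?_, fun i hi => h i hi _ ?_⟩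
    · simp only [List.tails_cons, List.mem_cons]
      exact Or.inr hs
    · simp
  · rintro ⟨h1, h2⟩ i hi s hs
    simp only [List.tails_cons, List.mem_cons] at hs
    rcases hs with rfl | hs
    · exact h2 i hi
    · exact h1 i hi s hs

theorem yam_self {l : List ℕ} (h : Yamanouchi l) (i : ℕ) (hi : 1 ≤ i) :
    l.count (i + 1) ≤ l.count i := h i hi l (by simp)

theorem yam_right {P s : List ℕ} (h : Yamanouchi (P ++ s)) : Yamanouchi s := by
  induction P with
  | nil => simpa using h
  | cons x P ih => exact ih ((yam_cons _ _).1 h).1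

theorem yam_swap {P s s' : List ℕ} (h : Yamanouchi (P ++ s)) (h' : Yamanouchi s')
    (hc : ∀ i, s.count i = s'.count i) : Yamanouchi (P ++ s') := by
  induction P with
  | nil => simpa using h'
  | cons x P ih =>
    have h1 := (yam_cons x (P ++ s)).1 h
    refine (yam_cons x (P ++ s')).2 ⟨ih h1.1, fun i hi => ?_⟩
    have := h1.2 i hi
    rw [List.count_cons, List.count_cons, List.count_append, List.count_append] at this ⊢
    rw [← hc, ← hc]
    exact this

theorem yam_cons_one {l : List ℕ} (h : Yamanouchi l) : Yamanouchi (1 :: l) := by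
  refine (yam_cons _ _).2 ⟨h, fun i hi => ?_⟩
  have := yam_self h i hi
  rw [List.count_cons, List.count_cons]
  have : ((1 : ℕ) == i + 1) = false := by simp; omega
  rw [this]
  simp
  omega

theorem yam_rep_one {l : List ℕ} (h : Yamanouchi l) (k : ℕ) :
    Yamanouchi (List.replicate k 1 ++ l) := by
  induction k with
  | zero => simpa using h
  | succ k ih => exact yam_cons_one ih

theorem yam_drop_one {U : List ℕ} {a : ℕ} (h : Yamanouchi (U ++ List.replicate (a + 1) 1))
    (hU : 1 ∉ U) (hc : U.count 2 ≤ a) : Yamanouchi (U ++ List.replicate a 1) := by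
  induction U with
  | nil => simpa using yam_rep_one yam_nil a
  | cons x U ih =>
    rw [List.cons_append] at h ⊢
    have h1 := (yam_cons x (U ++ List.replicate (a + 1) 1)).1 h
    simp only [List.mem_cons, not_or] at hU
    refine (yam_cons x (U ++ List.replicate a 1)).2 ⟨ih h1.1 hU.2 ((List.count_le_count_cons).trans hc), fun i hi => ?_⟩
    have := h1.2 i hi
    have e0 : U.count 1 = 0 := List.count_eq_zero.2 hU.2
    rw [List.count_cons] at hc
    simp only [List.count_cons, List.count_append, List.count_replicate] at this ⊢
    by_cases h2 : i = 1
    · subst h2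
      simp at hc ⊢
      omega
    · have e1 : ((1 : ℕ) == i) = false := by simp; omega
      have e2 : ((1 : ℕ) == i + 1) = false := by simp; omega
      rw [e1, e2] at this ⊢
      simpa using this

theorem sorted_split (R : List ℕ) (hs : R.Pairwise (· ≤ ·)) (h1 : ∀ x ∈ R, 1 ≤ x) :
    ∃ k R', R = List.replicate k 1 ++ R' ∧ 1 ∉ R' := by
  induction R with
  | nil => exact ⟨0, [], by simp, by simp⟩
  | cons x R ih =>
    rw [List.pairwise_cons] at hs
    obtain ⟨k, R', e, hR⟩ := ih hs.2 (fun y hy => h1 y (List.mem_cons_of_mem _ hy))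
    by_cases hx : x = 1
    · exact ⟨k + 1, R', by rw [hx, e]; rfl, hR⟩
    · refine ⟨0, x :: R, by simp, ?_⟩
      intro hm
      have hx1 := h1 x (by simp)
      rcases List.mem_cons.1 hm with h | h
      · exact hx h.symm
      · have := hs.1 1 h
        omega

theorem yam_main (P R A : List ℕ) (a : ℕ) (hs : R.Pairwise (· ≤ ·)) (h1 : ∀ x ∈ R, 1 ≤ x)
    (hA : 1 ∉ A) (h : Yamanouchi (P ++ (R ++ (A ++ List.replicate (a + 1) 1)))) :
    R.count 2 + A.count 2 ≤ a + 1 ∧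
    (Yamanouchi (P ++ ((1 :: R) ++ (A ++ List.replicate a 1))) ↔ R.count 2 + A.count 2 ≤ a) := by
  obtain ⟨k, R', rfl, hR⟩ := sorted_split R hs h1
  have hU : 1 ∉ R' ++ A := by simp [hR, hA]
  have hcR : R'.count 1 = 0 := List.count_eq_zero.2 hR
  have hcA : A.count 1 = 0 := List.count_eq_zero.2 hA
  have hcU : (List.replicate k 1 ++ R').count 2 + A.count 2 = (R' ++ A).count 2 := by
    simp [List.count_append, List.count_replicate]
  have h2 : Yamanouchi ((R' ++ A) ++ List.replicate (a + 1) 1) := by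
    have := yam_right h
    rw [List.append_assoc] at this
    simpa using yam_right this
  rw [hcU]
  refine ⟨?_, ?_, ?_⟩
  · have := yam_self h2 1 le_rfl
    simp [List.count_append, List.count_replicate, hcR, hcA] at this ⊢
    omega
  · intro h'
    have h3 := yam_right h'
    have e : (1 :: (List.replicate k 1 ++ R')) ++ (A ++ List.replicate a 1) =
      (1 :: List.replicate k 1) ++ ((R' ++ A) ++ List.replicate a 1) := by simp
    rw [e] at h3
    have := yam_self (yam_right h3) 1 le_rfl
    simp [List.count_append, List.count_replicate, hcR, hcA] at this ⊢
    omega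
  · intro hc
    have h3 := yam_rep_one (yam_drop_one h2 hU hc) (k + 1)
    refine yam_swap h ?_ ?_
    · simpa [List.replicate_succ] using h3
    · intro i
      simp [List.count_append, List.count_cons, List.count_replicate]
      split_ifs <;> omega

/-- Second coordinates of the boxes of row `r` with first coordinate `k`. -/
def rowL (lam : YoungDiagram) (T : ℕ → ℕ → ℕ × ℕ) (k r : ℕ) : List ℕ :=
  ((List.range (lam.rowLen r)).filter fun c => decide ((T r c).1 = k)).map fun c => (T r c).2

/-- Second coordinates of boxes with first coordinate `k` in rows `s, …, s+L-1`, bottom to top. -/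
def blockL (lam : YoungDiagram) (T : ℕ → ℕ → ℕ × ℕ) (k s L : ℕ) : List ℕ :=
  (List.range' s L).reverse.flatMap (rowL lam T k)

theorem blockL_succ (lam : YoungDiagram) (T : ℕ → ℕ → ℕ × ℕ) (k s L : ℕ) :
    blockL lam T k s (L + 1) = blockL lam T k (s + 1) L ++ rowL lam T k s := by
  simp [blockL, List.range'_succ]

theorem word_eq (lam : YoungDiagram) (T : ℕ → ℕ → ℕ × ℕ) :
    w'WordT lam 2 T = blockL lam T 2 0 (lam.colLen 0) ++ blockL lam T 1 0 (lam.colLen 0) := by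
  have e : (List.range 2).reverse = [1, 0] := by decide
  unfold w'WordT blockL
  rw [e, List.range_eq_range']
  simp [List.map_flatMap, Function.comp_def]
  rfl

theorem threshold (n : ℕ) (p : ℕ → Prop) (hp : ∀ c c', c ≤ c' → c' < n → p c' → p c) :
    ∃ a ≤ n, ∀ c < n, (p c ↔ c < a) := by
  induction n with
  | zero => exact ⟨0, le_rfl, by simp⟩
  | succ n ih =>
    by_cases h : p n
    · exact ⟨n + 1, le_rfl, fun c hc => ⟨fun _ => hc, fun _ => hp c n (by omega) (by omega) h⟩⟩
    · obtain ⟨a, ha, hc⟩ := ih (fun c c' h1 h2 => hp c c' h1 (by omega))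
      refine ⟨a, by omega, fun c hcn => ?_⟩
      by_cases e : c = n
      · subst e
        exact ⟨fun h' => absurd h' h, fun h' => absurd h' (by omega)⟩
      · exact hc c (by omega)

theorem filter_lt (n a : ℕ) (ha : a ≤ n) (p : ℕ → Bool) (hp : ∀ c < n, (p c = true ↔ c < a)) :
    (List.range n).filter p = List.range a ∧
    (List.range n).filter (fun c => !p c) = List.range' a (n - a) := by
  have e : List.range n = List.range a ++ List.range' a (n - a) := by
    rw [List.range_eq_range', List.range_eq_range']
    have := List.range'_append (s := 0) (m := a) (n := n - a) (step := 1)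
    simp at this
    rw [this]
    congr 1
    omega
  rw [e, List.filter_append, List.filter_append]
  have q1 : ∀ c ∈ List.range a, p c = true := by
    intro c hc
    rw [List.mem_range] at hc
    exact (hp c (by omega)).2 hc
  have q2 : ∀ c ∈ List.range' a (n - a), p c = false := by
    intro c hc
    rw [List.mem_range'_1] at hc
    have := (hp c (by omega)).not.2 (by omega)
    simpa using this
  constructor
  · rw [List.filter_eq_self.2 q1, List.filter_eq_nil_iff.2 (by intro c hc; simp [q2 c hc])]
    simp
  · rw [List.filter_eq_nil_iff.2 (by intro c hc; simp [q1 c hc]),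
      List.filter_eq_self.2 (by intro c hc; simp [q2 c hc])]
    simp

theorem card_row (lam : YoungDiagram) (r : ℕ) (p : ℕ × ℕ → Prop) [DecidablePred p]
    [DecidablePred fun c : ℕ × ℕ => c.1 = r ∧ p c] :
    (lam.cells.filter fun c => c.1 = r ∧ p c).card =
      ((Finset.range (lam.rowLen r)).filter fun c => p (r, c)).card := by
  symm
  apply Finset.card_bij (fun c _ => (r, c))
  · intro c hc
    simp only [Finset.mem_filter, Finset.mem_range] at hc
    simp only [Finset.mem_filter, YoungDiagram.mem_cells, YoungDiagram.mem_iff_lt_rowLen]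
    exact ⟨hc.1, trivial, hc.2⟩
  · intro c _ d _ h
    simpa using h
  · rintro ⟨x, y⟩ hc
    simp only [Finset.mem_filter, YoungDiagram.mem_cells, YoungDiagram.mem_iff_lt_rowLen] at hc
    obtain ⟨h1, rfl, h3⟩ := hc
    exact ⟨y, by simp [h1, h3], rfl⟩

theorem card_ico (n b d : ℕ) (hd : d ≤ n) (p : ℕ → Prop) [DecidablePred p]
    (hp : ∀ c < n, (p c ↔ b ≤ c ∧ c < d)) : ((Finset.range n).filter p).card = d - b := by
  rw [← Nat.card_Ico]
  congr 1
  ext c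
  simp only [Finset.mem_filter, Finset.mem_range, Finset.mem_Ico]
  constructor
  · rintro ⟨h1, h2⟩
    exact (hp c h1).1 h2
  · intro h
    have : c < n := by omega
    exact ⟨this, (hp c this).2 h⟩

theorem count_rowL (lam : YoungDiagram) (T : ℕ → ℕ → ℕ × ℕ) (k r v : ℕ) :
    (rowL lam T k r).count v =
      ((Finset.range (lam.rowLen r)).filter fun c => T r c = (k, v)).card := by
  unfold rowL
  rw [List.count, List.countP_map, List.countP_filter, List.countP_eq_length_filter,
    ← List.toFinset_card_of_nodup (List.Nodup.filter _ List.nodup_range)]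
  congr 1
  ext c
  simp [Prod.ext_iff, and_comm]

theorem mem_rowL {lam : YoungDiagram} {T : ℕ → ℕ → ℕ × ℕ} {k r v : ℕ} :
    v ∈ rowL lam T k r ↔ ∃ c < lam.rowLen r, T r c = (k, v) := by
  unfold rowL
  simp [Prod.ext_iff, and_assoc]

theorem mem_blockL {lam : YoungDiagram} {T : ℕ → ℕ → ℕ × ℕ} {k s L v : ℕ}
    (h : v ∈ blockL lam T k s L) : ∃ r c, s ≤ r ∧ (r, c) ∈ lam ∧ T r c = (k, v) := by
  unfold blockL at h
  simp only [List.mem_flatMap, List.mem_reverse, List.mem_range'_1, mem_rowL] at h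
  obtain ⟨r, hr, c, hc, e⟩ := h
  exact ⟨r, c, hr.1, YoungDiagram.mem_iff_lt_rowLen.2 hc, e⟩

/-- In a column-strict filling the second coordinate of a box `(1,v)` in row `r` exceeds `r`. -/
theorem row_lower {lam : YoungDiagram} {m : ℕ} {T : ℕ → ℕ → ℕ × ℕ} (h : IsBitabT lam 2 m T) :
    ∀ r c, (r, c) ∈ lam → (T r c).1 = 1 → r + 1 ≤ (T r c).2 := by
  intro r
  induction r with
  | zero => intro c hc _; exact (h.1 0 c hc).2.1
  | succ r ih =>
    intro c hc h1
    have hc' : (r, c) ∈ lam := lam.up_left_mem (Nat.le_succ r) le_rfl hc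
    have hb := (h.1 r c hc').1.1
    rcases h.2.2 r (r + 1) c hc (Nat.lt_succ_self r) with h2 | ⟨h2, h3⟩
    · omega
    · have := ih c hc' (by omega)
      omega

/-- The filling obtained from `T` by changing the entry `(1,a)` of box `(0,j)` to `(2,a)`. -/
def flipT (T : ℕ → ℕ → ℕ × ℕ) (j : ℕ) : ℕ → ℕ → ℕ × ℕ :=
  fun r c => if (r, c) = (0, j) then (2, (T 0 j).2) else T r c

theorem flipT_self (T : ℕ → ℕ → ℕ × ℕ) (j : ℕ) : flipT T j 0 j = (2, (T 0 j).2) := by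
  simp [flipT]

theorem flipT_ne (T : ℕ → ℕ → ℕ × ℕ) (j r c : ℕ) (h : ¬ (r = 0 ∧ c = j)) :
    flipT T j r c = T r c := by
  simp [flipT, h]

theorem flip_bitab {lam : YoungDiagram} {m : ℕ} {T : ℕ → ℕ → ℕ × ℕ} (h : IsBitabT lam 2 m T)
    (j : ℕ) (hj : (0, j) ∈ lam) (h1 : T 0 j = (1, 1))
    (hj' : ∀ j', j < j' → (0, j') ∈ lam → (T 0 j').1 ≠ 1) :
    IsBitabT lam 2 m (flipT T j) ↔ ¬ ((1, j) ∈ lam ∧ lexLe (T 1 j) (2, 1)) := by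
  constructor
  · rintro h' ⟨hm, hl⟩
    have := h'.2.2 0 1 j hm Nat.zero_lt_one
    rw [flipT_self, flipT_ne _ _ _ _ (by simp), h1] at this
    unfold lexLe at hl
    unfold lexLt at this
    simp at this hl
    omega
  · intro hn
    refine ⟨?_, ?_, ?_⟩
    · intro r c hc
      by_cases e : r = 0 ∧ c = j
      · obtain ⟨rfl, rfl⟩ := e
        rw [flipT_self]
        exact ⟨by simp, (h.1 _ _ hc).2⟩
      · rw [flipT_ne _ _ _ _ e]
        exact h.1 r c hc
    · intro r c c' hc hle
      by_cases e : r = 0 ∧ c = j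
      · obtain ⟨rfl, rfl⟩ := e
        by_cases e' : c' = c
        · subst e'
          right
          simp
        · have g1 := hj' c' (by omega) hc
          have g2 := h.1 _ _ hc
          rw [flipT_self, flipT_ne _ _ _ _ (by simp [e']), h1]
          unfold lexLe
          simp
          omega
      · rw [flipT_ne _ _ _ _ e]
        by_cases e' : r = 0 ∧ c' = j
        · obtain ⟨rfl, rfl⟩ := e'
          rw [flipT_self]
          have := h.2.1 _ _ _ hc hle
          rw [h1] at this
          unfold lexLe at this ⊢
          simp at this ⊢
          omega
        · rw [flipT_ne _ _ _ _ e']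
          exact h.2.1 _ _ _ hc hle
    · intro r r' c hc hlt
      rw [flipT_ne T j r' c (by omega)]
      by_cases e : r = 0 ∧ c = j
      · obtain ⟨rfl, rfl⟩ := e
        rw [flipT_self, h1]
        have hm : (1, c) ∈ lam := lam.up_left_mem (by omega) le_rfl hc
        have g1 : ¬ lexLe (T 1 c) (2, 1) := fun g => hn ⟨hm, g⟩
        have g2 := h.1 _ _ hm
        have g3 := h.1 _ _ hc
        have g4 : r' = 1 ∨ lexLt (T 1 c) (T r' c) := by
          by_cases q : r' = 1
          · exact Or.inl q
          · exact Or.inr (h.2.2 1 r' c hc (by omega))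
        rcases g4 with rfl | g4
        · unfold lexLe at g1
          unfold lexLt
          simp at g1 ⊢
          omega
        · unfold lexLe at g1
          unfold lexLt at g4 ⊢
          simp at g1 ⊢
          omega
      · rw [flipT_ne _ _ _ _ e]
        exact h.2.2 _ _ _ hc hlt

theorem blockL_congr (lam : YoungDiagram) (T T' : ℕ → ℕ → ℕ × ℕ) (k s L : ℕ)
    (h : ∀ r, s ≤ r → ∀ c, T r c = T' r c) : blockL lam T k s L = blockL lam T' k s L := by
  unfold blockL
  apply List.flatMap_congr
  intro r hr
  simp only [List.mem_reverse, List.mem_range'_1] at hr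
  unfold rowL
  simp only [h r hr.1]

theorem rowL_one {lam : YoungDiagram} {T : ℕ → ℕ → ℕ × ℕ} (r a : ℕ) (ha : a ≤ lam.rowLen r)
    (h : ∀ c < lam.rowLen r, ((T r c).1 = 1 ↔ c < a)) :
    rowL lam T 1 r = (List.range a).map fun c => (T r c).2 := by
  unfold rowL
  rw [(filter_lt _ a ha _ (by simpa using h)).1]

theorem rowL_two {lam : YoungDiagram} {m : ℕ} {T : ℕ → ℕ → ℕ × ℕ} (hB : IsBitabT lam 2 m T)
    (r a : ℕ) (ha : a ≤ lam.rowLen r) (h : ∀ c < lam.rowLen r, ((T r c).1 = 1 ↔ c < a)) :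
    rowL lam T 2 r = (List.range' a (lam.rowLen r - a)).map fun c => (T r c).2 := by
  unfold rowL
  rw [← (filter_lt _ a ha (fun c => decide ((T r c).1 = 1)) (by simpa using h)).2]
  congr 1
  apply List.filter_congr
  intro c hc
  rw [List.mem_range] at hc
  have := hB.1 r c (YoungDiagram.mem_iff_lt_rowLen.2 hc)
  by_cases e : (T r c).1 = 1
  · simp [e]
  · have : (T r c).1 = 2 := by omega
    simp [this]

theorem rowL_two_sorted {lam : YoungDiagram} {m : ℕ} {T : ℕ → ℕ → ℕ × ℕ}
    (hB : IsBitabT lam 2 m T) (r : ℕ) : (rowL lam T 2 r).Pairwise (· ≤ ·) := by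
  unfold rowL
  rw [List.pairwise_map]
  have h0 : (List.range (lam.rowLen r)).Pairwise (· < ·) := List.pairwise_lt_range
  refine List.Pairwise.imp_of_mem ?_ (h0.filter _)
  intro c c' hc hc' hlt
  simp only [List.mem_filter, List.mem_range, decide_eq_true_eq] at hc hc'
  have := hB.2.1 r c c' (YoungDiagram.mem_iff_lt_rowLen.2 hc'.1) hlt.le
  unfold lexLe at this
  omega

/-- All data on the reading word of `T` when `α_1 > 0`. -/
theorem word_data {lam : YoungDiagram} {m : ℕ} {T : ℕ → ℕ → ℕ × ℕ} (hB : IsBitabT lam 2 m T)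
    (hY : Yamanouchi (w'WordT lam 2 T)) (a b : ℕ) (ha : a + 1 ≤ lam.rowLen 0)
    (hac : ∀ c < lam.rowLen 0, ((T 0 c).1 = 1 ↔ c < a + 1)) (hb : b ≤ lam.rowLen 1)
    (hbc : ∀ c < lam.rowLen 1, ((T 1 c).1 = 1 ↔ c < b)) :
    T 0 a = (1, 1) ∧ (rowL lam T 2 0).count 2 + b ≤ a + 1 ∧
    (Yamanouchi (w'WordT lam 2 (flipT T a)) ↔ (rowL lam T 2 0).count 2 + b ≤ a) := by
  have h00 : (0, 0) ∈ lam := YoungDiagram.mem_iff_lt_rowLen.2 (by omega)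
  have hL0 : 0 < lam.colLen 0 := YoungDiagram.mem_iff_lt_colLen.1 h00
  obtain ⟨L, hL⟩ : ∃ L, lam.colLen 0 = L + 1 := ⟨lam.colLen 0 - 1, by omega⟩
  have hYT := hY
  rw [word_eq, hL, blockL_succ, blockL_succ, List.append_assoc] at hYT
  -- the last letter is 1
  have hma : (0, a) ∈ lam := YoungDiagram.mem_iff_lt_rowLen.2 (by omega)
  have h0a1 : (T 0 a).1 = 1 := (hac a (by omega)).2 (by omega)
  have h0a2 : (T 0 a).2 = 1 := by
    have hY1 := yam_right (yam_right (yam_right hYT))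
    rw [rowL_one 0 (a + 1) ha hac, List.range_succ, List.map_append] at hY1
    have hY2 := yam_right hY1
    have h1 := (hB.1 0 a hma).2.1
    by_contra hne
    have := yam_self hY2 ((T 0 a).2 - 1) (by omega)
    rw [Nat.sub_add_cancel h1] at this
    simp at this
    omega
  have hrow0 : ∀ c < a + 1, (T 0 c).2 = 1 := by
    intro c hc
    have g1 := hB.2.1 0 c a hma (by omega)
    have hcm : (0, c) ∈ lam := YoungDiagram.mem_iff_lt_rowLen.2 (by omega)
    have g2 := hB.1 0 c hcm
    unfold lexLe at g1
    omega
  have hR1 : rowL lam T 1 0 = List.replicate (a + 1) 1 := by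
    rw [rowL_one 0 (a + 1) ha hac, List.eq_replicate_iff]
    refine ⟨by simp, ?_⟩
    intro x hx
    simp only [List.mem_map, List.mem_range] at hx
    obtain ⟨c, hc, rfl⟩ := hx
    exact hrow0 c hc
  rw [hR1] at hYT
  have hflip1 : rowL lam (flipT T a) 1 0 = List.replicate a 1 := by
    rw [rowL_one 0 a (by omega), List.eq_replicate_iff]
    · refine ⟨by simp, ?_⟩
      intro x hx
      simp only [List.mem_map, List.mem_range] at hx
      obtain ⟨c, hc, rfl⟩ := hx
      rw [flipT_ne _ _ _ _ (by omega)]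
      exact hrow0 c (by omega)
    · intro c hc
      by_cases e : c = a
      · subst e
        simp [flipT_self]
      · rw [flipT_ne _ _ _ _ (by omega), hac c hc]
        omega
  have hflip2 : rowL lam (flipT T a) 2 0 = 1 :: rowL lam T 2 0 := by
    have e1 : rowL lam (flipT T a) 2 0 =
        (List.range' a (lam.rowLen 0 - a)).map fun c => (flipT T a 0 c).2 := by
      unfold rowL
      rw [← (filter_lt _ a (by omega) (fun c => decide (c < a)) (by simp)).2]
      congr 1
      apply List.filter_congr
      intro c hc
      rw [List.mem_range] at hc
      by_cases e : c = a
      · subst e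
        simp [flipT_self]
      · rw [flipT_ne _ _ _ _ (by omega)]
        have g1 := hB.1 0 c (YoungDiagram.mem_iff_lt_rowLen.2 hc)
        have g2 := hac c hc
        by_cases e2 : c < a
        · have : (T 0 c).1 = 1 := g2.2 (by omega)
          simp [this, e2]
        · have : (T 0 c).1 = 2 := by omega
          simp [this, e2]
    rw [e1, rowL_two hB 0 (a + 1) ha hac]
    have e2 : lam.rowLen 0 - a = (lam.rowLen 0 - (a + 1)) + 1 := by omega
    rw [e2, List.range'_succ, List.map_cons, flipT_self]
    congr 1
    apply List.map_congr_left
    intro c hc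
    rw [List.mem_range'_1] at hc
    rw [flipT_ne _ _ _ _ (by omega)]
  have hA1 : 1 ∉ blockL lam T 1 1 L := by
    intro hm
    obtain ⟨r, c, hr, hc, e⟩ := mem_blockL hm
    have := row_lower hB r c hc (by rw [e])
    rw [e] at this
    simp at this
    omega
  have hA2 : (blockL lam T 1 1 L).count 2 = b := by
    rcases L with _ | L
    · have : ¬ (1, 0) ∈ lam := by
        rw [YoungDiagram.mem_iff_lt_colLen]
        omega
      rw [YoungDiagram.mem_iff_lt_rowLen] at this
      have : b = 0 := by omega
      simp [blockL, this]
    · rw [blockL_succ, List.count_append]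
      have z : (blockL lam T 1 2 L).count 2 = 0 := by
        rw [List.count_eq_zero]
        intro hm
        obtain ⟨r, c, hr, hc, e⟩ := mem_blockL hm
        have := row_lower hB r c hc (by rw [e])
        rw [e] at this
        simp at this
        omega
      have hrep : rowL lam T 1 1 = List.replicate b 2 := by
        have er := rowL_one 1 b hb hbc
        rcases b with _ | b
        · simpa using er
        have hmb : (1, b) ∈ lam := YoungDiagram.mem_iff_lt_rowLen.2 (by omega)
        have hb2 : (T 1 b).2 ≤ 2 := by
          have hY1 := yam_right (yam_right hYT)
          rw [blockL_succ, List.append_assoc] at hY1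
          have hY2 := yam_right hY1
          rw [er, List.range_succ, List.map_append, List.append_assoc] at hY2
          have hY3 := yam_right hY2
          by_contra hne
          have := yam_self hY3 ((T 1 b).2 - 1) (by omega)
          rw [Nat.sub_add_cancel (by omega)] at this
          simp [List.count_cons, List.count_replicate] at this
          split_ifs at this <;> omega
        rw [er, List.eq_replicate_iff]
        refine ⟨by simp, ?_⟩
        intro x hx
        simp only [List.mem_map, List.mem_range] at hx
        obtain ⟨c, hc, rfl⟩ := hx
        have hcm : (1, c) ∈ lam := YoungDiagram.mem_iff_lt_rowLen.2 (by omega)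
        have g1 := hB.2.1 1 c b hmb (by omega)
        have g2 := (hbc c (by omega)).2 hc
        have g3 := (hbc b (by omega)).2 (by omega)
        have g4 := row_lower hB 1 c hcm g2
        unfold lexLe at g1
        omega
      rw [z, hrep]
      simp
  have hmain := yam_main (blockL lam T 2 1 L) (rowL lam T 2 0) (blockL lam T 1 1 L) a
    (rowL_two_sorted hB 0) (by
      intro x hx
      obtain ⟨c, hc, e⟩ := mem_rowL.1 hx
      have := (hB.1 0 c (YoungDiagram.mem_iff_lt_rowLen.2 hc)).2.1
      rw [e] at this
      exact this) hA1 hYT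
  rw [hA2] at hmain
  refine ⟨Prod.ext h0a1 h0a2, hmain.1, ?_⟩
  have hc : ∀ r, 1 ≤ r → ∀ c, flipT T a r c = T r c :=
    fun r hr c => flipT_ne _ _ _ _ (by omega)
  rw [word_eq, hL, blockL_succ, blockL_succ, List.append_assoc, hflip1, hflip2,
    blockL_congr lam (flipT T a) T 2 _ L hc, blockL_congr lam (flipT T a) T 1 _ L hc]
  exact hmain.2

/-- Let `T ∈ B'_λ(2,m)` and let `α_i` be the number of boxes in row `i` of
`T` with first coordinate `1`. Then `φ(T) = 0` — i.e. there is no box `(0,j)` which is the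
rightmost box of the first row with first coordinate `1` and such that changing its entry
`(1,a)` to `(2,a)` produces an element of `B'_λ(2,m)` — if and only if `T` is a Kronecker
tableau: (I) `α_1 = α_2`, or (II) `α_1 > α_2` and either (i) the number of boxes in the second
row of `T` with entry `(2,1)` equals `α_1 − α_2`, or (ii) the number of boxes in the first row
of `T` with entry `(2,2)` equals `α_1 − α_2`. -/
theorem stmt_13 (lam : YoungDiagram) (m : ℕ) (hm : 1 ≤ m)
    (T : ℕ → ℕ → ℕ × ℕ) (hT : IsBitab' lam m T) :
    (¬ ∃ j : ℕ, (0, j) ∈ lam ∧ (T 0 j).1 = 1 ∧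
        (∀ j', j < j' → (0, j') ∈ lam → (T 0 j').1 ≠ 1) ∧
        IsBitab' lam m (fun r c => if (r, c) = (0, j) then (2, (T 0 j).2) else T r c)) ↔
      (alphaRow lam T 1 = alphaRow lam T 2 ∨
        (alphaRow lam T 2 < alphaRow lam T 1 ∧
          ((lam.cells.filter fun c => c.1 = 1 ∧ T c.1 c.2 = (2, 1)).card =
              alphaRow lam T 1 - alphaRow lam T 2 ∨
            (lam.cells.filter fun c => c.1 = 0 ∧ T c.1 c.2 = (2, 2)).card =
              alphaRow lam T 1 - alphaRow lam T 2))) := by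
  obtain ⟨hB, hY⟩ := hT
  have hmem : ∀ r c, (r, c) ∈ lam ↔ c < lam.rowLen r :=
    fun r c => YoungDiagram.mem_iff_lt_rowLen
  have hn : lam.rowLen 1 ≤ lam.rowLen 0 := lam.rowLen_anti 0 1 (by omega)
  have hmono : ∀ r, ∀ c c', c ≤ c' → c' < lam.rowLen r → (T r c').1 = 1 → (T r c).1 = 1 := by
    intro r c c' h1 h2 h3
    have g1 := hB.2.1 r c c' ((hmem r c').2 h2) h1
    have g2 := hB.1 r c ((hmem r c).2 (by omega))
    unfold lexLe at g1
    omega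
  obtain ⟨a, ha, hac⟩ := threshold (lam.rowLen 0) (fun c => (T 0 c).1 = 1) (hmono 0)
  obtain ⟨b, hb, hbc⟩ := threshold (lam.rowLen 1) (fun c => (T 1 c).1 = 1) (hmono 1)
  obtain ⟨d, hd, hdc⟩ := threshold (lam.rowLen 1) (fun c => lexLe (T 1 c) (2, 1)) (by
    intro c c' h1 h2 h3
    have g1 := hB.2.1 1 c c' ((hmem 1 c').2 h2) h1
    unfold lexLe at *
    simp at h3 ⊢
    omega)
  have hα1 : alphaRow lam T 1 = a :=
    (card_row lam 0 (fun c => (T c.1 c.2).1 = 1)).trans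
      (card_ico _ 0 a ha _ (by simpa using hac))
  have hα2 : alphaRow lam T 2 = b :=
    (card_row lam 1 (fun c => (T c.1 c.2).1 = 1)).trans
      (card_ico _ 0 b hb _ (by simpa using hbc))
  have h21 : (lam.cells.filter fun c => c.1 = 1 ∧ T c.1 c.2 = (2, 1)).card = d - b := by
    refine (card_row lam 1 (fun c => T c.1 c.2 = (2, 1))).trans (card_ico _ b d hd _ ?_)
    intro c hc
    have g1 := hB.1 1 c ((hmem 1 c).2 hc)
    have g2 := hbc c hc
    have g3 := hdc c hc
    unfold lexLe at g3
    rw [← g3, ← not_lt, ← g2, Prod.ext_iff]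
    simp
    omega
  have h22 : (lam.cells.filter fun c => c.1 = 0 ∧ T c.1 c.2 = (2, 2)).card =
      (rowL lam T 2 0).count 2 := by
    rw [count_rowL]
    exact card_row lam 0 (fun c => T c.1 c.2 = (2, 2))
  have hbd : b ≤ d := by
    rcases b with _ | b
    · omega
    have g := (hbc b (by omega)).2 (by omega)
    have := (hdc b (by omega)).1 (Or.inl (by simp [g]))
    omega
  have hda : d ≤ a := by
    rcases d with _ | d
    · omega
    have g := (hdc d (by omega)).2 (by omega)
    have g1 := hB.2.2 0 1 d ((hmem 1 d).2 (by omega)) (by omega)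
    have g2 := hB.1 0 d ((hmem 0 d).2 (by omega))
    have := (hac d (by omega)).1 (by
      unfold lexLe at g
      unfold lexLt at g1
      simp at g
      omega)
    omega
  rw [h21, h22, hα1, hα2]
  rcases a with _ | a
  · refine ⟨fun _ => Or.inl (by omega), ?_⟩
    rintro _ ⟨j, hj, hj1, _⟩
    have := (hac j ((hmem 0 j).1 hj)).1 hj1
    omega
  obtain ⟨w1, w2, w3⟩ := word_data hB hY a b ha hac hb hbc
  have hlast : ∀ j', a < j' → (0, j') ∈ lam → (T 0 j').1 ≠ 1 := by
    intro j' h1 h2 h3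
    have := (hac j' ((hmem 0 j').1 h2)).1 h3
    omega
  have hma : (0, a) ∈ lam := (hmem 0 a).2 (by omega)
  have hbt := flip_bitab hB a hma w1 hlast
  have hbt' : ((1, a) ∈ lam ∧ lexLe (T 1 a) (2, 1)) ↔ d = a + 1 := by
    rw [hmem]
    constructor
    · rintro ⟨h1, h2⟩
      have := (hdc a h1).1 h2
      omega
    · intro h
      have h1 : a < lam.rowLen 1 := by omega
      exact ⟨h1, (hdc a h1).2 (by omega)⟩
  have hex : (∃ j : ℕ, (0, j) ∈ lam ∧ (T 0 j).1 = 1 ∧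
        (∀ j', j < j' → (0, j') ∈ lam → (T 0 j').1 ≠ 1) ∧
        IsBitab' lam m (flipT T j)) ↔ (d ≠ a + 1 ∧ (rowL lam T 2 0).count 2 + b ≤ a) := by
    constructor
    · rintro ⟨j, hj, hj1, hj2, hj3⟩
      have e1 := (hac j ((hmem 0 j).1 hj)).1 hj1
      have e2 : j = a := by
        by_contra hne
        exact hj2 a (by omega) hma (by rw [w1])
      subst e2
      exact ⟨fun h => hbt.1 hj3.1 (hbt'.2 h), w3.1 hj3.2⟩
    · rintro ⟨h1, h2⟩
      exact ⟨a, hma, by rw [w1], hlast, hbt.2 (fun h => h1 (hbt'.1 h)), w3.2 h2⟩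
  refine (not_congr hex).trans ?_
  generalize (rowL lam T 2 0).count 2 = x at w2
  clear hex hbt' hbt hlast w3 h21 h22 hα1 hα2 hac hbc hdc
  omega
end
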